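/- arXiv:2004.08169 — 3 statements merged into one kernel-verified Lean document; each statement's English description precedes it below -/
import Mathlib

section
/- Let n ≥ 1, μ > 1, and define f : ℝⁿ → ℝ by f(ξ) = Φ_μ(|ξ|). Then f is of class C² and there exist constants c₁, c₂ > 0 (depending only on μ and n) such that for all ξ, η ∈ ℝⁿ: c₁(1+|ξ|)^{−μ}|η|² ≤ D²f(ξ)(η,η) ≤ c₂(1+|ξ|)^{−1}|η|². -/
open Real MeasureTheory

/-- `Φ_μ(t) = (μ-1) ∫₀ᵗ ∫₀ˢ (1+r)^{-μ} dr ds`. -/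
noncomputable def Phi (μ : ℝ) (t : ℝ) : ℝ :=
  (μ - 1) * ∫ s in (0:ℝ)..t, ∫ r in (0:ℝ)..s, (1 + r) ^ (-μ)

/-- The Hessian bilinear form `D²f(ξ)(η,η)` of `f` at `ξ` in direction `η`. -/
noncomputable def hessQ {n : ℕ} (f : EuclideanSpace ℝ (Fin n) → ℝ)
    (ξ η : EuclideanSpace ℝ (Fin n)) : ℝ :=
  fderiv ℝ (fun x => fderiv ℝ f x η) ξ η

/-!
For a radial function `x ↦ φ ‖x‖` with `φ' 0 = 0`, put `a t = φ' t / t` for `t ≠ 0` and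
`a 0 = φ'' 0`; that is, `a = dslope φ' 0`. The gradient at `x` is `a ‖x‖ • x`, and the Hessian acts
as `φ'' ‖x‖` on the line `ℝ ∙ x` and as `a ‖x‖` on its orthogonal complement, so the ellipticity
bounds are bounds on these two eigenvalues. For `Φ_μ` the second derivative
`(μ - 1) (1 + t) ^ (-μ)` is decreasing and `a t` is its mean value over `[0, t]`, whence
`φ'' t ≤ a t ≤ μ - 1`; moreover `t * a t = φ' t ≤ 1`. Adding the last two upper bounds yields
`(1 + t) * a t ≤ μ`.
-/

open Filter Set Submodule
open scoped Topology RealInnerProductSpace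

section OneVariable

theorem hasDerivAt_integral_of_continuousOn {F : Type*} [NormedAddCommGroup F] [NormedSpace ℝ F]
    [CompleteSpace F] {f : ℝ → F} {s : Set ℝ} {a b : ℝ} (hs : IsOpen s) (hs' : s.OrdConnected)
    (hf : ContinuousOn f s) (ha : a ∈ s) (hb : b ∈ s) :
    HasDerivAt (fun t => ∫ r in a..t, f r) (f b) b :=
  intervalIntegral.integral_hasDerivAt_right
    (hf.mono (hs'.uIcc_subset ha hb)).intervalIntegrable
    (hf.stronglyMeasurableAtFilter hs b hb) (hf.continuousAt (hs.mem_nhds hb))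

theorem hasDerivAt_dslope_of_ne {𝕜 F : Type*} [NontriviallyNormedField 𝕜] [NormedAddCommGroup F]
    [NormedSpace 𝕜 F] {f : 𝕜 → F} {f' : F} {a b : 𝕜} (hf : HasDerivAt f f' b) (hab : b ≠ a) :
    HasDerivAt (dslope f a) ((b - a)⁻¹ • (f' - dslope f a b)) b := by
  have hba : b - a ≠ 0 := sub_ne_zero.2 hab
  have hslope : HasDerivAt (slope f a) _ b :=
    (((hasDerivAt_id b).sub_const a).fun_inv hba).smul (hf.sub_const (f a))
  refine (hslope.congr_of_eventuallyEq (dslope_eventuallyEq_slope_of_ne f hab)).congr_deriv ?_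
  rw [dslope_of_ne f hab, slope_def_module]
  simp only [id_eq, vsub_eq_sub, smul_sub]
  match_scalars <;> field_simp

theorem dslope_mem_Icc_of_antitoneOn {f f' : ℝ → ℝ} {a b : ℝ} (hab : a ≤ b)
    (hf : ∀ t ∈ Icc a b, HasDerivAt f (f' t) t) (hf' : AntitoneOn f' (Icc a b)) :
    dslope f a b ∈ Icc (f' b) (f' a) := by
  have ha : a ∈ Icc a b := left_mem_Icc.2 hab
  have hb : b ∈ Icc a b := right_mem_Icc.2 hab
  obtain rfl | hlt := hab.eq_or_lt
  · simp [(hf a ha).deriv]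
  · obtain ⟨c, hc, hslope⟩ := exists_hasDerivAt_eq_slope f f' hlt
      (fun t ht => (hf t ht).continuousAt.continuousWithinAt)
      (fun t ht => hf t (Ioo_subset_Icc_self ht))
    rw [dslope_of_ne f hlt.ne', slope_def_field, ← hslope]
    have hc' := Ioo_subset_Icc_self hc
    exact ⟨hf' hc' hb hc.2.le, hf' ha hc' hc.1.le⟩

theorem continuousOn_dslope_of_differentiableAt {𝕜 F : Type*} [NontriviallyNormedField 𝕜]
    [NormedAddCommGroup F] [NormedSpace 𝕜 F] {f : 𝕜 → F} {s : Set 𝕜}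
    (hf : ∀ t ∈ s, DifferentiableAt 𝕜 f t) (a : 𝕜) : ContinuousOn (dslope f a) s := by
  refine continuousOn_of_forall_continuousAt fun t ht => ?_
  obtain rfl | hne := eq_or_ne t a
  · exact continuousAt_dslope_same.2 (hf t ht)
  · exact (continuousAt_dslope_of_ne hne).2 (hf t ht).continuousAt

end OneVariable

theorem hasFDerivAt_smul_self_zero {𝕜 E : Type*} [NontriviallyNormedField 𝕜]
    [NormedAddCommGroup E] [NormedSpace 𝕜 E] {c : E → 𝕜} (hc : ContinuousAt c 0) :
    HasFDerivAt (fun y : E => c y • y) (c 0 • ContinuousLinearMap.id 𝕜 E) 0 := by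
  rw [hasFDerivAt_iff_isLittleO_nhds_zero]
  have hlim : (fun y => c y - c 0) =o[𝓝 0] (fun _ => (1 : 𝕜)) :=
    (Asymptotics.isLittleO_one_iff 𝕜).2 (by simpa using hc.tendsto.sub_const (c 0))
  simpa [sub_smul] using hlim.smul_isBigO (Asymptotics.isBigO_refl (fun y : E => y) (𝓝 0))

section SpanSingleton

variable {𝕜 E : Type*} [RCLike 𝕜] [NormedAddCommGroup E] [InnerProductSpace 𝕜 E]

theorem starProjection_span_singleton_eq_smulRight (x : E) :
    (𝕜 ∙ x).starProjection = ((‖x‖ ^ 2 : ℝ) : 𝕜)⁻¹ • (innerSL 𝕜 x).smulRight x := by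
  ext y
  simp [starProjection_singleton, smul_smul, div_eq_inv_mul]

theorem continuousAt_starProjection_span_singleton {x : E} (hx : x ≠ 0) :
    ContinuousAt (fun y : E => (𝕜 ∙ y).starProjection) x := by
  simp only [starProjection_span_singleton_eq_smulRight]
  have hnorm : ((‖x‖ ^ 2 : ℝ) : 𝕜) ≠ 0 := by simpa using hx
  have hinner : Continuous fun y : E => innerSL 𝕜 y := (innerSL 𝕜).continuous
  have hrank : Continuous fun y : E => (innerSL 𝕜 y).smulRight y :=
    (ContinuousLinearMap.smulRightL 𝕜 E E).continuous₂.comp (hinner.prodMk continuous_id)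
  have hsq : Continuous fun y : E => ((‖y‖ ^ 2 : ℝ) : 𝕜) := by fun_prop
  exact (hsq.continuousAt.inv₀ hnorm).smul hrank.continuousAt

end SpanSingleton

section Radial

variable {E : Type*} [NormedAddCommGroup E] [InnerProductSpace ℝ E]

theorem hasFDerivAt_norm {x : E} (hx : x ≠ 0) :
    HasFDerivAt (fun y : E => ‖y‖) (‖x‖⁻¹ • innerSL ℝ x) x := by
  have hsqrt := (hasStrictFDerivAt_norm_sq x).hasFDerivAt.sqrt (by simpa using hx)
  simp only [sqrt_sq (norm_nonneg _)] at hsqrt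
  refine hsqrt.congr_fderiv ?_
  module

/-- Writing the derivative of `φ` as `c * ‖x‖` makes the formula valid at `x = 0` as well. -/
theorem hasFDerivAt_comp_norm {φ : ℝ → ℝ} {c : ℝ} {x : E} (hφ : HasDerivAt φ (c * ‖x‖) ‖x‖) :
    HasFDerivAt (fun y : E => φ ‖y‖) (c • innerSL ℝ x) x := by
  obtain rfl | hx := eq_or_ne x 0
  · rw [norm_zero, mul_zero, hasDerivAt_iff_isLittleO_nhds_zero] at hφ
    rw [hasFDerivAt_iff_isLittleO_nhds_zero]
    simpa [Function.comp_def] using (hφ.comp_tendsto (tendsto_norm_zero (E := E))).of_norm_right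
  · refine (hφ.comp_hasFDerivAt x (hasFDerivAt_norm hx)).congr_fderiv ?_
    rw [smul_smul, mul_inv_cancel_right₀ (norm_ne_zero_iff.2 hx)]

/-- The operator acting as `b` on the line `ℝ ∙ x` and as `a` on its orthogonal complement: the
form taken by the Hessian of a radial function at `x`, with `b` the radial and `a` the tangential
eigenvalue. At `x = 0` the line degenerates and the operator is `a • id`. -/
noncomputable def radialOperator (a b : ℝ) (x : E) : E →L[ℝ] E :=
  a • ContinuousLinearMap.id ℝ E + (b - a) • (ℝ ∙ x).starProjection

theorem continuous_radialOperator {α β : E → ℝ} (hα : Continuous α) (hβ : Continuous β)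
    (h₀ : α 0 = β 0) : Continuous fun x => radialOperator (α x) (β x) x := by
  refine (hα.smul continuous_const).add (continuous_iff_continuousAt.2 fun x => ?_)
  obtain rfl | hx := eq_or_ne x 0
  · have hlim : Tendsto (fun y => ‖β y - α y‖) (𝓝 0) (𝓝 0) := by
      simpa [h₀] using ((hβ.sub hα).norm.tendsto 0)
    simp only [ContinuousAt, h₀, sub_self, zero_smul]
    refine squeeze_zero_norm (fun y => ?_) hlim
    rw [norm_smul]
    exact mul_le_of_le_one_right (norm_nonneg _) (starProjection_norm_le _)
  · exact (hβ.sub hα).continuousAt.smul (continuousAt_starProjection_span_singleton hx)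

theorem inner_radialOperator_self (a b : ℝ) (x η : E) :
    ⟪radialOperator a b x η, η⟫ =
      a * (‖η‖ ^ 2 - ‖(ℝ ∙ x).starProjection η‖ ^ 2) + b * ‖(ℝ ∙ x).starProjection η‖ ^ 2 := by
  have hP : ⟪(ℝ ∙ x).starProjection η, η⟫ = ‖(ℝ ∙ x).starProjection η‖ ^ 2 :=
    re_inner_starProjection_eq_normSq (𝕜 := ℝ) _ η
  simp only [radialOperator, add_apply, smul_apply, ContinuousLinearMap.id_apply, inner_add_left,
    real_inner_smul_left, real_inner_self_eq_norm_sq, hP]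
  ring

theorem le_inner_radialOperator_self {a b m : ℝ} (ha : m ≤ a) (hb : m ≤ b) (x η : E) :
    m * ‖η‖ ^ 2 ≤ ⟪radialOperator a b x η, η⟫ := by
  rw [inner_radialOperator_self]
  have hnorm : 0 ≤ ‖η‖ ^ 2 - ‖(ℝ ∙ x).starProjection η‖ ^ 2 :=
    sub_nonneg.2 (pow_le_pow_left₀ (norm_nonneg _) (norm_starProjection_apply_le _ η) 2)
  linear_combination mul_le_mul_of_nonneg_right ha hnorm +
    mul_le_mul_of_nonneg_right hb (sq_nonneg ‖(ℝ ∙ x).starProjection η‖)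

theorem inner_radialOperator_self_le {a b M : ℝ} (ha : a ≤ M) (hb : b ≤ M) (x η : E) :
    ⟪radialOperator a b x η, η⟫ ≤ M * ‖η‖ ^ 2 := by
  rw [inner_radialOperator_self]
  have hnorm : 0 ≤ ‖η‖ ^ 2 - ‖(ℝ ∙ x).starProjection η‖ ^ 2 :=
    sub_nonneg.2 (pow_le_pow_left₀ (norm_nonneg _) (norm_starProjection_apply_le _ η) 2)
  linear_combination mul_le_mul_of_nonneg_right ha hnorm +
    mul_le_mul_of_nonneg_right hb (sq_nonneg ‖(ℝ ∙ x).starProjection η‖)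

theorem hasFDerivAt_dslope_norm_smul {ψ : ℝ → ℝ} {b : ℝ} {x : E} (hψ : HasDerivAt ψ b ‖x‖) :
    HasFDerivAt (fun y : E => dslope ψ 0 ‖y‖ • y) (radialOperator (dslope ψ 0 ‖x‖) b x) x := by
  obtain rfl | hx := eq_or_ne x 0
  · rw [norm_zero] at hψ
    have hcont : ContinuousAt (fun y : E => dslope ψ 0 ‖y‖) 0 :=
      ContinuousAt.comp_of_eq (continuousAt_dslope_same.2 hψ.differentiableAt)
        continuous_norm.continuousAt norm_zero
    simpa [radialOperator] using hasFDerivAt_smul_self_zero hcont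
  · have hcoeff := (hasDerivAt_dslope_of_ne hψ (norm_ne_zero_iff.2 hx)).comp_hasFDerivAt x
      (hasFDerivAt_norm hx)
    refine (hcoeff.smul (hasFDerivAt_id x)).congr_fderiv ?_
    rw [radialOperator, starProjection_span_singleton_eq_smulRight, RCLike.ofReal_real_eq_id]
    ext y
    simp only [Function.comp_apply, id_eq, add_apply, smul_apply,
      ContinuousLinearMap.smulRight_apply, ContinuousLinearMap.id_apply, smul_eq_mul, sub_zero]
    match_scalars <;> field_simp

theorem hasFDerivAt_comp_norm_dslope {φ ψ : ℝ → ℝ} {x : E} (hφ : HasDerivAt φ (ψ ‖x‖) ‖x‖)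
    (hψ₀ : ψ 0 = 0) : HasFDerivAt (fun y : E => φ ‖y‖) (innerSL ℝ (dslope ψ 0 ‖x‖ • x)) x := by
  have hmul : dslope ψ 0 ‖x‖ * ‖x‖ = ψ ‖x‖ := by
    simpa [hψ₀, mul_comm] using sub_smul_dslope ψ 0 ‖x‖
  simpa using hasFDerivAt_comp_norm (hmul ▸ hφ)

theorem contDiff_two_comp_norm {φ ψ ψ' : ℝ → ℝ} (hφ : ∀ t, 0 ≤ t → HasDerivAt φ (ψ t) t)
    (hψ : ∀ t, 0 ≤ t → HasDerivAt ψ (ψ' t) t) (hψ₀ : ψ 0 = 0) (hψ' : ContinuousOn ψ' (Ici 0)) :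
    ContDiff ℝ 2 fun x : E => φ ‖x‖ := by
  have hdslope : ContinuousOn (dslope ψ 0) (Ici 0) :=
    continuousOn_dslope_of_differentiableAt (fun t ht => (hψ t ht).differentiableAt) 0
  have hfield : ContDiff ℝ 1 fun x : E => dslope ψ 0 ‖x‖ • x := by
    refine contDiff_one_iff_hasFDerivAt.2
      ⟨_, ?_, fun x => hasFDerivAt_dslope_norm_smul (hψ ‖x‖ (norm_nonneg x))⟩
    exact continuous_radialOperator (hdslope.comp_continuous continuous_norm norm_nonneg)
      (hψ'.comp_continuous continuous_norm norm_nonneg) (by simp [(hψ 0 le_rfl).deriv])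
  exact contDiff_succ_iff_hasFDerivAt.2 ⟨_, (innerSL ℝ).contDiff.comp hfield,
    fun x => hasFDerivAt_comp_norm_dslope (hφ ‖x‖ (norm_nonneg x)) hψ₀⟩

theorem fderiv_fderiv_comp_norm_apply {φ ψ : ℝ → ℝ} {b : ℝ} {x : E}
    (hφ : ∀ t, 0 ≤ t → HasDerivAt φ (ψ t) t) (hψ : HasDerivAt ψ b ‖x‖) (hψ₀ : ψ 0 = 0) (η ζ : E) :
    fderiv ℝ (fun y => fderiv ℝ (fun z : E => φ ‖z‖) y η) x ζ =
      ⟪radialOperator (dslope ψ 0 ‖x‖) b x ζ, η⟫ := by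
  have hgrad (y : E) : fderiv ℝ (fun z : E => φ ‖z‖) y η = ⟪dslope ψ 0 ‖y‖ • y, η⟫ := by
    rw [(hasFDerivAt_comp_norm_dslope (hφ ‖y‖ (norm_nonneg y)) hψ₀).fderiv, innerSL_apply_apply]
  have hfield := hasFDerivAt_dslope_norm_smul hψ
  simp only [hgrad]
  rw [(hfield.inner ℝ (hasFDerivAt_const η x)).fderiv]
  simp

end Radial

section Phi

variable {μ t : ℝ}

/-- The derivative `Φ_μ'(t) = (μ - 1) ∫₀ᵗ (1 + r)^{-μ} dr`, kept in integral form so that `Φ_μ` and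
`Φ_μ'` are both differentiated by the fundamental theorem of calculus. -/
noncomputable def phiDeriv (μ t : ℝ) : ℝ :=
  (μ - 1) * ∫ r in (0 : ℝ)..t, (1 + r) ^ (-μ)

/-- The second derivative `Φ_μ''(t) = (μ - 1) (1 + t)^{-μ}`, the radial eigenvalue of the Hessian
of `Φ_μ(|ξ|)`. -/
noncomputable def phiDeriv₂ (μ t : ℝ) : ℝ :=
  (μ - 1) * (1 + t) ^ (-μ)

theorem continuousOn_one_add_rpow (p : ℝ) : ContinuousOn (fun r : ℝ => (1 + r) ^ p) (Ioi (-1)) :=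
  ContinuousOn.rpow_const (by fun_prop) fun r hr => Or.inl (by linarith [mem_Ioi.1 hr])

theorem hasDerivAt_phiDeriv (ht : -1 < t) : HasDerivAt (phiDeriv μ) (phiDeriv₂ μ t) t :=
  (hasDerivAt_integral_of_continuousOn isOpen_Ioi ordConnected_Ioi
    (continuousOn_one_add_rpow (-μ)) (by simp) ht).const_mul (μ - 1)

theorem hasDerivAt_Phi (ht : -1 < t) : HasDerivAt (Phi μ) (phiDeriv μ t) t := by
  refine (hasDerivAt_integral_of_continuousOn isOpen_Ioi ordConnected_Ioi (fun s hs => ?_)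
    (by simp) ht).const_mul (μ - 1)
  exact (hasDerivAt_integral_of_continuousOn isOpen_Ioi ordConnected_Ioi
    (continuousOn_one_add_rpow (-μ)) (by simp) hs).continuousAt.continuousWithinAt

theorem phiDeriv_zero (μ : ℝ) : phiDeriv μ 0 = 0 := by
  simp [phiDeriv]

theorem phiDeriv_eq_one_sub_rpow (ht : -1 < t) : phiDeriv μ t = 1 - (1 + t) ^ (1 - μ) := by
  obtain rfl | hμ := eq_or_ne μ 1
  · simp [phiDeriv]
  have hnotMem : (0 : ℝ) ∉ uIcc (1 + 0) (1 + t) := notMem_uIcc_of_lt (by norm_num) (by linarith)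
  have hμ' : 1 - μ ≠ 0 := sub_ne_zero.2 hμ.symm
  rw [phiDeriv, intervalIntegral.integral_comp_add_left (fun r => r ^ (-μ)) 1,
    integral_rpow (Or.inr ⟨neg_injective.ne hμ, hnotMem⟩), neg_add_eq_sub, add_zero, one_rpow]
  field_simp
  ring

theorem phiDeriv_le_one (ht : -1 < t) : phiDeriv μ t ≤ 1 := by
  rw [phiDeriv_eq_one_sub_rpow ht]
  linarith [rpow_nonneg (show 0 ≤ 1 + t by linarith) (1 - μ)]

theorem antitoneOn_phiDeriv₂ (hμ : 1 ≤ μ) : AntitoneOn (phiDeriv₂ μ) (Ioi (-1)) := by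
  intro s hs t _ hst
  have hpos : 0 < 1 + s := by linarith [mem_Ioi.1 hs]
  exact mul_le_mul_of_nonneg_left (rpow_le_rpow_of_nonpos hpos (by linarith) (by linarith))
    (by linarith)

theorem dslope_phiDeriv_mem_Icc (hμ : 1 ≤ μ) (ht : 0 ≤ t) :
    dslope (phiDeriv μ) 0 t ∈ Icc (phiDeriv₂ μ t) (μ * (1 + t)⁻¹) := by
  have hmean : dslope (phiDeriv μ) 0 t ∈ Icc (phiDeriv₂ μ t) (phiDeriv₂ μ 0) :=
    dslope_mem_Icc_of_antitoneOn ht (fun s hs => hasDerivAt_phiDeriv (by linarith [hs.1]))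
      ((antitoneOn_phiDeriv₂ hμ).mono fun s hs => mem_Ioi.2 (by linarith [hs.1]))
  have hmul : t * dslope (phiDeriv μ) 0 t ≤ 1 := by
    calc t * dslope (phiDeriv μ) 0 t = phiDeriv μ t := by
          simpa [phiDeriv_zero] using sub_smul_dslope (phiDeriv μ) 0 t
      _ ≤ 1 := phiDeriv_le_one (by linarith)
  refine ⟨hmean.1, ?_⟩
  rw [← div_eq_mul_inv, le_div_iff₀ (by linarith)]
  have hone : dslope (phiDeriv μ) 0 t ≤ μ - 1 := by simpa [phiDeriv₂] using hmean.2
  linarith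

end Phi

theorem Phi_mu_elliptic_general {E : Type*} [NormedAddCommGroup E] [InnerProductSpace ℝ E] {μ : ℝ}
    (hμ : 1 ≤ μ) :
    ContDiff ℝ 2 (fun ξ : E => Phi μ ‖ξ‖) ∧
    ∀ ξ η : E,
      (μ - 1) * (1 + ‖ξ‖) ^ (-μ) * ‖η‖ ^ 2 ≤
        fderiv ℝ (fun x => fderiv ℝ (fun y : E => Phi μ ‖y‖) x η) ξ η ∧
      fderiv ℝ (fun x => fderiv ℝ (fun y : E => Phi μ ‖y‖) x η) ξ η ≤
        μ * (1 + ‖ξ‖) ^ (-(1 : ℝ)) * ‖η‖ ^ 2 := by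
  have hΦ : ∀ t, 0 ≤ t → HasDerivAt (Phi μ) (phiDeriv μ t) t :=
    fun t ht => hasDerivAt_Phi (by linarith)
  have hΦ' : ∀ t, 0 ≤ t → HasDerivAt (phiDeriv μ) (phiDeriv₂ μ t) t :=
    fun t ht => hasDerivAt_phiDeriv (by linarith)
  have hΦ'' : ContinuousOn (phiDeriv₂ μ) (Ici 0) :=
    (continuousOn_const.mul (continuousOn_one_add_rpow (-μ))).mono
      (Ici_subset_Ioi.2 (by norm_num))
  refine ⟨contDiff_two_comp_norm hΦ hΦ' (phiDeriv_zero μ) hΦ'', fun ξ η => ?_⟩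
  obtain ⟨hlower, hupper⟩ := dslope_phiDeriv_mem_Icc hμ (norm_nonneg ξ)
  rw [fderiv_fderiv_comp_norm_apply hΦ (hΦ' ‖ξ‖ (norm_nonneg ξ)) (phiDeriv_zero μ), rpow_neg_one]
  exact ⟨le_inner_radialOperator_self hlower le_rfl ξ η,
    inner_radialOperator_self_le hupper (hlower.trans hupper) ξ η⟩

/-- `f(ξ) = Φ_μ(|ξ|)` is `C²` and satisfies the ellipticity estimate
`c₁(1+|ξ|)^{-μ}|η|² ≤ D²f(ξ)(η,η) ≤ c₂(1+|ξ|)^{-1}|η|²`. -/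
theorem Phi_mu_elliptic (n : ℕ) (hn : 1 ≤ n) (μ : ℝ) (hμ : 1 < μ)
    (f : EuclideanSpace ℝ (Fin n) → ℝ) (hf : f = fun ξ => Phi μ ‖ξ‖) :
    ContDiff ℝ 2 f ∧
    ∃ c₁ c₂ : ℝ, 0 < c₁ ∧ 0 < c₂ ∧
      ∀ ξ η : EuclideanSpace ℝ (Fin n),
        c₁ * (1 + ‖ξ‖) ^ (-μ) * ‖η‖ ^ 2 ≤ hessQ f ξ η ∧
        hessQ f ξ η ≤ c₂ * (1 + ‖ξ‖) ^ (-(1:ℝ)) * ‖η‖ ^ 2 := by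
  subst hf
  obtain ⟨hsmooth, hbounds⟩ := Phi_mu_elliptic_general (E := EuclideanSpace ℝ (Fin n)) hμ.le
  exact ⟨hsmooth, μ - 1, μ, by linarith, by linarith, hbounds⟩
end

section
/- (Higher-integrability iteration.) In the splitting setting described below, assume additionally that μ₁ < 2 and |u| ≤ M on Ω for some M > 0. Fix χ > 2 and set s := χ/2 − 1, ε̂ := 1 − μ₁/2 > 0, α := s − ε̂/2, and assume α ≥ 0. Then there exists l₀ ∈ ℕ such that for every integer l ≥ l₀ and every η ∈ C_c^∞(Ω) with 0 ≤ η ≤ 1 there is a constant c > 0 depending on η, χ, l, M and the structural constants but not on δ or u, with ∫_Ω η^{2l} Γ₁^{s+1} dx ≤ c [ 1 + ∫_Ω η^{2l} Γ₁^{s + (2+μ₁)/4} dx ]. -/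
open Real MeasureTheory

/-- Partial derivative of `v : ℝ² → ℝ` in the `i`-th coordinate direction. -/
noncomputable def pd (i : Fin 2) (v : EuclideanSpace ℝ (Fin 2) → ℝ)
    (x : EuclideanSpace ℝ (Fin 2)) : ℝ :=
  fderiv ℝ v x (EuclideanSpace.single i 1)

/-!
Write `p = ∂ₖu`, `Γ = 1 + p²`. Since `∫ ηⁿ Γ^(s+1) = ∫ ηⁿ Γ^s + ∫ ∂ₖu · (ηⁿ p Γ^s)`, integrating
by parts and using `|u| ≤ M` leaves, besides lower powers of `Γ`, the term `∫ ηⁿ Γ^s |∂ₖp|`. By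
AM-GM it is at most `∫ ηⁿ Γ^(α-μ/2) (∂ₖp)² + C ∫ ηⁿ Γ^(2s-α+μ/2)`. Ellipticity of the `k`-th flux
and a Caccioppoli inequality, obtained by testing the differentiated equation with `ηⁿ p Γ^α`,
bound the first of these by `∫ ηⁿ⁻² Γ^(α+1)`. As `α < s`, all remaining powers of `Γ` are strictly
below `s + 1`; for large `n` the missing powers of `η` are compensated by this gap in Young's
inequality, and these terms are absorbed into the left-hand side. For `α = s - (1 - μ/2)/2` the
exponent `2s - α + μ/2` is `s + (2 + μ)/4`.
-/

section Algebra

lemma mul_rpow_le_mul_add {z C ε θ : ℝ} (hz : 0 ≤ z) (hC : 0 ≤ C) (hε : 0 < ε) (hθ0 : 0 ≤ θ)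
    (hθ1 : θ < 1) : C * z ^ θ ≤ ε * z + C * (C / ε) ^ (θ / (1 - θ)) := by
  have hθ : 0 < 1 - θ := sub_pos.2 hθ1
  rcases le_total C (ε * z ^ (1 - θ)) with hCz | hCz
  · calc C * z ^ θ ≤ ε * z ^ (1 - θ) * z ^ θ := by gcongr
      _ = ε * z := by rw [mul_assoc, ← rpow_add_of_nonneg hz hθ.le hθ0, sub_add_cancel, rpow_one]
      _ ≤ _ := le_add_of_nonneg_right (by positivity)
  · calc C * z ^ θ = C * (z ^ (1 - θ)) ^ (θ / (1 - θ)) := by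
          rw [← rpow_mul hz, mul_div_cancel₀ _ hθ.ne']
      _ ≤ C * (C / ε) ^ (θ / (1 - θ)) := by
          gcongr
          rwa [le_div_iff₀' hε]
      _ ≤ _ := le_add_of_nonneg_left (by positivity)

lemma pow_mul_rpow_le_rpow {b t r G : ℝ} {m n : ℕ} (hb : 0 ≤ b) (ht : 0 < t)
    (hmn : n * b ≤ m * t) (hr0 : 0 ≤ r) (hr1 : r ≤ 1) (hG : 0 ≤ G) :
    r ^ m * G ^ b ≤ (r ^ n * G ^ t) ^ (b / t) := by
  rw [mul_rpow (by positivity) (by positivity), ← rpow_mul hG, mul_div_cancel₀ _ ht.ne',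
    ← rpow_natCast, ← rpow_natCast, ← rpow_mul hr0]
  gcongr ?_ * _
  refine rpow_le_rpow_of_exponent_ge' hr0 hr1 (by positivity) ?_
  rwa [← mul_div_assoc, div_le_iff₀ ht]

lemma mul_rpow_mul_le_sq_add {G r q s : ℝ} (C a : ℝ) (hG : 0 < G) (hrq : r + q = 2 * s) :
    C * (G ^ s * a) ≤ G ^ r * a ^ 2 + C ^ 2 / 4 * G ^ q := by
  have hsq (y : ℝ) : G ^ y = (G ^ (y / 2)) ^ 2 := by
    rw [← rpow_mul_natCast hG.le]
    simp
  have hs : G ^ s = G ^ (r / 2) * G ^ (q / 2) := by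
    rw [← rpow_add hG]
    congr 1
    linarith
  rw [hsq r, hsq q, hs]
  linarith [sq_nonneg (G ^ (r / 2) * a - C / 2 * G ^ (q / 2))]

lemma min_one_le_one_add_mul {θ : ℝ} (a : ℝ) (hθ0 : 0 ≤ θ) (hθ1 : θ ≤ 1) :
    min 1 (1 + a) ≤ 1 + a * θ := by
  rcases le_total 0 a with ha | ha
  · exact (min_le_left _ _).trans (le_add_of_nonneg_right (by positivity))
  · exact (min_le_right _ _).trans (by nlinarith)

lemma abs_le_one_add_sq_rpow_half (p : ℝ) : |p| ≤ (1 + p ^ 2) ^ (1 / 2 : ℝ) := by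
  rw [← sqrt_eq_rpow]
  exact abs_le_sqrt (by linarith)

lemma sq_div_one_add_sq_le_one (p : ℝ) : p ^ 2 / (1 + p ^ 2) ≤ 1 :=
  div_le_one_of_le₀ (by linarith) (by positivity)

lemma hasDerivAt_mul_one_add_sq_rpow (β t : ℝ) :
    HasDerivAt (fun t : ℝ => t * (1 + t ^ 2) ^ β)
      ((1 + t ^ 2) ^ β * (1 + 2 * β * (t ^ 2 / (1 + t ^ 2)))) t := by
  have hpos : 0 < 1 + t ^ 2 := by positivity
  have hbase : HasDerivAt (fun t : ℝ => 1 + t ^ 2) (2 * t) t := by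
    simpa using (hasDerivAt_pow 2 t).const_add 1
  refine ((hasDerivAt_id t).mul (hbase.rpow_const (p := β) (.inl hpos.ne'))).congr_deriv ?_
  rw [rpow_sub_one hpos.ne', id]
  field_simp

end Algebra

section GradientWeight

variable {X : Type*} {η p : X → ℝ} {n : ℕ} {β : ℝ}

/-- The test function `ηⁿ p (1 + p²)^β`; for a directional derivative `p` of the solution and
`Γ = 1 + p²` this is the test function `ηⁿ p Γ^β` of the Caccioppoli argument. -/
noncomputable def cutoffTest (n : ℕ) (β : ℝ) (η p : X → ℝ) (x : X) : ℝ :=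
  η x ^ n * (p x * (1 + p x ^ 2) ^ β)

lemma pow_mul_rpow_add_one_eq_add_mul_cutoffTest (n : ℕ) (β : ℝ) (η p : X → ℝ) (x : X) :
    η x ^ n * (1 + p x ^ 2) ^ (β + 1) =
      η x ^ n * (1 + p x ^ 2) ^ β + p x * cutoffTest n β η p x := by
  rw [rpow_add_one (by positivity), cutoffTest]
  ring

variable [TopologicalSpace X]

lemma tsupport_cutoffTest_subset (hn : n ≠ 0) : tsupport (cutoffTest n β η p) ⊆ tsupport η := by
  refine closure_mono fun x hx hηx => hx ?_
  simp [cutoffTest, hηx, hn]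

lemma hasCompactSupport_cutoffTest (hη : HasCompactSupport η) (hn : n ≠ 0) :
    HasCompactSupport (cutoffTest n β η p) :=
  hη.of_isClosed_subset (isClosed_tsupport _) (tsupport_cutoffTest_subset hn)

lemma continuous_one_add_sq_rpow (hp : Continuous p) (β : ℝ) :
    Continuous (fun x => (1 + p x ^ 2) ^ β) := by
  have hne (x : X) : 1 + p x ^ 2 ≠ 0 := by positivity
  exact (continuous_const.add (hp.pow 2)).rpow_const fun x => .inl (hne x)

lemma integrable_pow_mul_of_hasCompactSupport [MeasurableSpace X] [OpensMeasurableSpace X]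
    (ν : Measure X) [IsFiniteMeasureOnCompacts ν] {g : X → ℝ} (hη : Continuous η)
    (hηs : HasCompactSupport η) (hn : n ≠ 0) (hg : Continuous g) :
    Integrable (fun x => η x ^ n * g x) ν :=
  ((hη.pow n).mul hg).integrable_of_hasCompactSupport
    (hηs.comp_left (g := (· ^ n)) (by simp [hn])).mul_right

lemma setIntegral_pow_mul_eq_integral [MeasurableSpace X] (ν : Measure X) {S : Set X}
    (hηS : tsupport η ⊆ S) (hn : n ≠ 0) (g : X → ℝ) :
    ∫ x in S, η x ^ n * g x ∂ν = ∫ x, η x ^ n * g x ∂ν :=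
  setIntegral_eq_integral_of_forall_compl_eq_zero fun x hx => by
    rw [image_eq_zero_of_notMem_tsupport fun h => hx (hηS h), zero_pow hn, zero_mul]

end GradientWeight

section DirectionalDerivative

variable {E : Type*} [NormedAddCommGroup E] [NormedSpace ℝ E]

/-- The derivative of `u` in the direction `v`, with the point as last argument so that it can be
iterated. -/
noncomputable def dirDeriv (v : E) (u : E → ℝ) (x : E) : ℝ :=
  fderiv ℝ u x v

local notation:max "∂[" v "]" => dirDeriv v

variable {u w : E → ℝ} {v v' x : E}

lemma contDiff_dirDeriv {m n : WithTop ℕ∞} (hu : ContDiff ℝ n u) (hmn : m + 1 ≤ n) (v : E) :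
    ContDiff ℝ m (∂[v] u) :=
  (hu.fderiv_right hmn).clm_apply contDiff_const

lemma continuous_dirDeriv (hu : ContDiff ℝ 1 u) (v : E) : Continuous (∂[v] u) :=
  (contDiff_dirDeriv (m := 0) hu (by simp) v).continuous

lemma hasCompactSupport_dirDeriv (hu : HasCompactSupport u) (v : E) :
    HasCompactSupport (∂[v] u) :=
  hu.fderiv_apply ℝ v

lemma dirDeriv_eq_zero_of_notMem_tsupport (hx : x ∉ tsupport u) (v : E) : ∂[v] u x = 0 := by
  simp [dirDeriv, fderiv_of_notMem_tsupport ℝ hx]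

lemma dirDeriv_mul (hu : DifferentiableAt ℝ u x) (hw : DifferentiableAt ℝ w x) :
    ∂[v] (fun y => u y * w y) x = ∂[v] u x * w x + u x * ∂[v] w x := by
  simp only [dirDeriv, fderiv_fun_mul hu hw, add_apply, smul_apply, smul_eq_mul]
  ring

lemma dirDeriv_comp {h : ℝ → ℝ} {h' : ℝ} (hh : HasDerivAt h h' (u x))
    (hu : DifferentiableAt ℝ u x) : ∂[v] (fun y => h (u y)) x = h' * ∂[v] u x := by
  have hchain : fderiv ℝ (fun y => h (u y)) x = h' • fderiv ℝ u x :=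
    (hh.comp_hasFDerivAt x hu.hasFDerivAt).fderiv
  simp only [dirDeriv, hchain, smul_apply, smul_eq_mul]

lemma dirDeriv_comm (hu : ContDiff ℝ 2 u) (v v' x : E) :
    ∂[v] (∂[v'] u) x = ∂[v'] (∂[v] u) x := by
  have hd : DifferentiableAt ℝ (fderiv ℝ u) x :=
    (hu.fderiv_right (m := 1) (by norm_num)).differentiable (by simp) x
  have heval (w z : E) : ∂[w] (∂[z] u) x = fderiv ℝ (fderiv ℝ u) x w z := by
    change fderiv ℝ (fun y => fderiv ℝ u y z) x w = _
    simp [fderiv_clm_apply hd (differentiableAt_const z)]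
  rw [heval, heval]
  exact (hu.contDiffAt.isSymmSndFDerivAt (by simp)).eq v v'

lemma exists_abs_dirDeriv_le {ι : Type*} [Finite ι] (hu : ContDiff ℝ 1 u)
    (hus : HasCompactSupport u) (e : ι → E) : ∃ K, ∀ i x, |∂[e i] u x| ≤ K := by
  have := Fintype.ofFinite ι
  obtain ⟨B, hB⟩ := (hus.fderiv ℝ).exists_bound_of_continuous (hu.continuous_fderiv (by simp))
  refine ⟨B * ‖e‖, fun i x => (fderiv ℝ u x).le_of_opNorm_le_of_le (hB x) (norm_le_pi_norm e i)⟩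

section IntegrationByParts

variable [FiniteDimensional ℝ E] [MeasurableSpace E] [BorelSpace E] (ν : Measure E)
  [ν.IsAddHaarMeasure]

lemma integral_mul_dirDeriv_eq_neg (hu : ContDiff ℝ 1 u) (hw : ContDiff ℝ 1 w)
    (hws : HasCompactSupport w) (v : E) :
    ∫ x, u x * ∂[v] w x ∂ν = -∫ x, ∂[v] u x * w x ∂ν :=
  integral_mul_fderiv_eq_neg_fderiv_mul_of_integrable
    (((continuous_dirDeriv hu v).mul hw.continuous).integrable_of_hasCompactSupport hws.mul_left)
    ((hu.continuous.mul (continuous_dirDeriv hw v)).integrable_of_hasCompactSupport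
      (hasCompactSupport_dirDeriv hws v).mul_left)
    ((hu.continuous.mul hw.continuous).integrable_of_hasCompactSupport hws.mul_left)
    (fun x _ => hu.differentiable one_ne_zero x) (fun x _ => hw.differentiable one_ne_zero x)

lemma integral_dirDeriv_mul_dirDeriv_comm (hu : ContDiff ℝ 1 u) (hw : ContDiff ℝ 2 w)
    (hws : HasCompactSupport w) (v v' : E) :
    ∫ x, ∂[v] u x * ∂[v'] w x ∂ν = ∫ x, ∂[v'] u x * ∂[v] w x ∂ν := by
  have hparts (z z' : E) : ∫ x, ∂[z] u x * ∂[z'] w x ∂ν = -∫ x, u x * ∂[z] (∂[z'] w) x ∂ν := by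
    rw [integral_mul_dirDeriv_eq_neg ν hu (contDiff_dirDeriv hw (by norm_num) z')
      (hasCompactSupport_dirDeriv hws z'), neg_neg]
  simp only [hparts, dirDeriv_comm hw v v']

lemma integral_sum_dirDeriv_mul_dirDeriv_eq_zero {ι : Type*} [Fintype ι] {e : ι → E}
    {F : ι → E → ℝ} (hF : ∀ i, ContDiff ℝ 1 (F i)) (hw : ContDiff ℝ 2 w)
    (hws : HasCompactSupport w) (hdiv : ∀ x ∈ tsupport w, ∑ i, ∂[e i] (F i) x = 0) (v : E) :
    ∫ x, ∑ i, ∂[v] (F i) x * ∂[e i] w x ∂ν = 0 := by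
  have hint (z z' : E) (i : ι) : Integrable (fun x => ∂[z] (F i) x * ∂[z'] w x) ν :=
    ((continuous_dirDeriv (hF i) z).mul
      (continuous_dirDeriv (hw.of_le one_le_two) z')).integrable_of_hasCompactSupport
      (hasCompactSupport_dirDeriv hws z').mul_left
  calc ∫ x, ∑ i, ∂[v] (F i) x * ∂[e i] w x ∂ν
      = ∑ i, ∫ x, ∂[v] (F i) x * ∂[e i] w x ∂ν := integral_finsetSum _ fun i _ => hint _ _ i
    _ = ∑ i, ∫ x, ∂[e i] (F i) x * ∂[v] w x ∂ν :=
      Finset.sum_congr rfl fun i _ => integral_dirDeriv_mul_dirDeriv_comm ν (hF i) hw hws v (e i)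
    _ = ∫ x, ∑ i, ∂[e i] (F i) x * ∂[v] w x ∂ν := (integral_finsetSum _ fun i _ => hint _ _ i).symm
    _ = ∫ _, 0 ∂ν := by
      congr 1 with x
      rw [← Finset.sum_mul]
      by_cases hx : x ∈ tsupport w
      · rw [hdiv x hx, zero_mul]
      · rw [dirDeriv_eq_zero_of_notMem_tsupport hx, mul_zero]
    _ = 0 := integral_zero _ _

end IntegrationByParts

section Cutoff

/-- A `C²` cut-off function: compactly supported with values in `[0, 1]`. -/
structure IsCutoff (η : E → ℝ) : Prop where
  contDiff : ContDiff ℝ 2 η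
  hasCompactSupport : HasCompactSupport η
  nonneg : ∀ x, 0 ≤ η x
  le_one : ∀ x, η x ≤ 1

variable {η p : E → ℝ} {n m : ℕ} {β s K : ℝ}

lemma contDiff_one_add_sq_rpow {N : WithTop ℕ∞} (hp : ContDiff ℝ N p) (β : ℝ) :
    ContDiff ℝ N (fun x => (1 + p x ^ 2) ^ β) := by
  have hne (x : E) : 1 + p x ^ 2 ≠ 0 := by positivity
  exact (contDiff_const.add (hp.pow 2)).rpow_const_of_ne hne

lemma contDiff_cutoffTest {N : WithTop ℕ∞} (hη : ContDiff ℝ N η) (hp : ContDiff ℝ N p) (n : ℕ)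
    (β : ℝ) : ContDiff ℝ N (cutoffTest n β η p) :=
  (hη.pow n).mul (hp.mul (contDiff_one_add_sq_rpow hp β))

lemma dirDeriv_cutoffTest (hη : DifferentiableAt ℝ η x) (hp : DifferentiableAt ℝ p x) :
    ∂[v] (cutoffTest (n + 1) β η p) x =
      (n + 1) * η x ^ n * ∂[v] η x * (p x * (1 + p x ^ 2) ^ β) +
      η x ^ (n + 1) * ((1 + p x ^ 2) ^ β * (1 + 2 * β * (p x ^ 2 / (1 + p x ^ 2))) *
        ∂[v] p x) := by
  have hweight := hasDerivAt_mul_one_add_sq_rpow β (p x)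
  have hcomp : DifferentiableAt ℝ (fun y => p y * (1 + p y ^ 2) ^ β) x :=
    hweight.differentiableAt.comp x hp
  change ∂[v] (fun y => η y ^ (n + 1) * (p y * (1 + p y ^ 2) ^ β)) x = _
  rw [dirDeriv_mul (u := fun y => η y ^ (n + 1)) (hη.pow _) hcomp,
    dirDeriv_comp (hasDerivAt_pow (n + 1) (η x)) hη, dirDeriv_comp hweight hp]
  simp

/-- Here `r`, `h`, `a` stand for `η x`, `∂[v] η x`, `∂[v] p x`, so that the bracket multiplied by
`A * a` is `∂[v] (cutoffTest (m + 2) α η p) x`. -/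
lemma caccioppoli_pointwise {A Λ α r p h a : ℝ} (hα : -1 / 2 < α) (hA0 : 0 ≤ A) (hAΛ : A ≤ Λ)
    (hr : 0 ≤ r) (hh : |h| ≤ K) :
    min 1 (1 + 2 * α) ^ 2 * (r ^ (m + 2) * (A * ((1 + p ^ 2) ^ α * a ^ 2))) ≤
      2 * min 1 (1 + 2 * α) * (A * a * ((m + 2) * r ^ (m + 1) * h * (p * (1 + p ^ 2) ^ α) +
        r ^ (m + 2) * ((1 + p ^ 2) ^ α * (1 + 2 * α * (p ^ 2 / (1 + p ^ 2))) * a))) +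
      Λ * ((m + 2) * K) ^ 2 * (r ^ m * (1 + p ^ 2) ^ (α + 1)) := by
  have hκθ : min 1 (1 + 2 * α) ≤ 1 + 2 * α * (p ^ 2 / (1 + p ^ 2)) :=
    min_one_le_one_add_mul _ (by positivity) (sq_div_one_add_sq_le_one p)
  have hκ : 0 < min 1 (1 + 2 * α) := lt_min one_pos (by linarith)
  rw [rpow_add_one (by positivity)]
  set κ := min 1 (1 + 2 * α)
  set θ := 1 + 2 * α * (p ^ 2 / (1 + p ^ 2))
  set B := (1 + p ^ 2) ^ α
  have hB : 0 < B := by positivity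
  have hhp : A * (h ^ 2 * p ^ 2) ≤ Λ * (K ^ 2 * (1 + p ^ 2)) := by
    have hh2 : h ^ 2 ≤ K ^ 2 := sq_le_sq.2 (hh.trans (le_abs_self K))
    have hp2 : p ^ 2 ≤ 1 + p ^ 2 := by linarith
    have hΛ : 0 ≤ Λ := hA0.trans hAΛ
    gcongr ?_ * (?_ * ?_)
  have hremainder : 0 ≤ r ^ m * B * (m + 2) ^ 2 *
      (Λ * (K ^ 2 * (1 + p ^ 2)) - A * (h ^ 2 * p ^ 2)) :=
    mul_nonneg (by positivity) (sub_nonneg.2 hhp)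
  have hsquare : 0 ≤ A * B * r ^ m * (κ * r * a + (m + 2) * h * p) ^ 2 := by positivity
  have hcoeff : 0 ≤ 2 * κ * (A * B * r ^ (m + 2) * a ^ 2) * (θ - κ) :=
    mul_nonneg (by positivity) (sub_nonneg.2 hκθ)
  linear_combination hremainder + hsquare + hcoeff

lemma neg_mul_dirDeriv_cutoffTest_le {M : ℝ} (hs : 0 ≤ s) (hη : IsCutoff η)
    (hp : DifferentiableAt ℝ p x) (hux : |u x| ≤ M) (hK : |∂[v] η x| ≤ K) :
    -(u x * ∂[v] (cutoffTest (m + 1) s η p) x) ≤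
      M * (1 + 2 * s) * (η x ^ (m + 1) * ((1 + p x ^ 2) ^ s * |∂[v] p x|)) +
      M * (m + 1) * K * (η x ^ m * (1 + p x ^ 2) ^ (s + 1 / 2)) := by
  have hη0 := hη.nonneg x
  have hM : 0 ≤ M := (abs_nonneg _).trans hux
  have hK0 : 0 ≤ K := (abs_nonneg _).trans hK
  have hp_half := abs_le_one_add_sq_rpow_half (p x)
  have hθ := sq_div_one_add_sq_le_one (p x)
  rw [dirDeriv_cutoffTest (hη.contDiff.differentiable two_ne_zero x) hp,
    rpow_add (by positivity) s]
  set B := (1 + p x ^ 2) ^ s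
  set θ := p x ^ 2 / (1 + p x ^ 2)
  have hB : 0 < B := by positivity
  have hθ0 : 0 ≤ θ := by positivity
  refine (neg_le_abs _).trans ?_
  calc |u x * ((m + 1) * η x ^ m * ∂[v] η x * (p x * B) +
          η x ^ (m + 1) * (B * (1 + 2 * s * θ) * ∂[v] p x))|
      ≤ |u x| * (|(m + 1) * η x ^ m * ∂[v] η x * (p x * B)| +
          |η x ^ (m + 1) * (B * (1 + 2 * s * θ) * ∂[v] p x)|) := by
        rw [abs_mul]
        gcongr
        exact abs_add_le _ _
    _ = |u x| * ((m + 1) * η x ^ m * |∂[v] η x| * (|p x| * B) +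
          η x ^ (m + 1) * (B * (1 + 2 * s * θ) * |∂[v] p x|)) := by
        simp only [abs_mul, abs_of_nonneg (show 0 ≤ (m : ℝ) + 1 by positivity),
          abs_of_nonneg (pow_nonneg hη0 _), abs_of_pos hB,
          abs_of_nonneg (show 0 ≤ 1 + 2 * s * θ by positivity)]
    _ ≤ M * ((m + 1) * η x ^ m * K * ((1 + p x ^ 2) ^ (1 / 2 : ℝ) * B) +
          η x ^ (m + 1) * (B * (1 + 2 * s * 1) * |∂[v] p x|)) := by gcongr
    _ = _ := by ring

variable [MeasurableSpace E] [BorelSpace E] (ν : Measure E)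

namespace IsCutoff

lemma integrable_pow_mul [IsFiniteMeasureOnCompacts ν] (hη : IsCutoff η) (hn : n ≠ 0)
    {g : E → ℝ} (hg : Continuous g) : Integrable (fun x => η x ^ n * g x) ν :=
  integrable_pow_mul_of_hasCompactSupport ν hη.contDiff.continuous hη.hasCompactSupport hn hg

lemma exists_integral_pow_mul_rpow_le [IsFiniteMeasureOnCompacts ν] (hη : IsCutoff η)
    (C : ℝ) {ε b t : ℝ} (hε : 0 < ε) (hb : 0 ≤ b) (hbt : b < t) (hm : m ≠ 0) (hn : n ≠ 0)
    (hmn : n * b ≤ m * t) :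
    ∃ D, 0 ≤ D ∧ ∀ G : E → ℝ, Continuous G → (∀ x, 0 ≤ G x) →
      C * ∫ x, η x ^ m * G x ^ b ∂ν ≤ ε * ∫ x, η x ^ n * G x ^ t ∂ν + D := by
  have ht : 0 < t := hb.trans_lt hbt
  set S := tsupport η
  set D := |C| * (|C| / ε) ^ (b / t / (1 - b / t))
  have hS : ν S ≠ ⊤ := IsCompact.measure_ne_top hη.hasCompactSupport
  have hD : 0 ≤ D := by positivity
  refine ⟨ν.real S * D, by positivity, fun G hG hG0 => ?_⟩
  have hint {i : ℕ} (hi : i ≠ 0) {y : ℝ} (hy : 0 ≤ y) :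
      Integrable (fun x => η x ^ i * G x ^ y) ν :=
    hη.integrable_pow_mul ν hi (hG.rpow_const fun _ => .inr hy)
  have hpointwise (x : E) : C * (η x ^ m * G x ^ b) ≤ ε * (η x ^ n * G x ^ t) + D := by
    have hη0 := hη.nonneg x
    have hGx := hG0 x
    calc C * (η x ^ m * G x ^ b) ≤ |C| * (η x ^ n * G x ^ t) ^ (b / t) :=
          mul_le_mul (le_abs_self C) (pow_mul_rpow_le_rpow hb ht hmn hη0 (hη.le_one x) hGx)
            (by positivity) (abs_nonneg C)
      _ ≤ _ := mul_rpow_le_mul_add (by positivity) (abs_nonneg C) hε (by positivity)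
          ((div_lt_one ht).2 hbt)
  have hupper : IntegrableOn (fun x => ε * (η x ^ n * G x ^ t)) S ν :=
    ((hint hn ht.le).const_mul ε).integrableOn
  calc C * ∫ x, η x ^ m * G x ^ b ∂ν
      = ∫ x in S, C * (η x ^ m * G x ^ b) ∂ν := by
        rw [integral_const_mul, setIntegral_pow_mul_eq_integral ν subset_rfl hm]
    _ ≤ ∫ x in S, (ε * (η x ^ n * G x ^ t) + D) ∂ν :=
        integral_mono ((hint hm hb).const_mul C).integrableOn
          (hupper.add (integrableOn_const hS)) hpointwise
    _ = ε * ∫ x, η x ^ n * G x ^ t ∂ν + ν.real S * D := by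
        rw [integral_add hupper (integrableOn_const hS), integral_const_mul,
          setIntegral_pow_mul_eq_integral ν subset_rfl hn, setIntegral_const, smul_eq_mul]

lemma exists_lowerOrder_integral_le [IsFiniteMeasureOnCompacts ν] (hη : IsCutoff η)
    (C₁ C₂ : ℝ) {α : ℝ} (hm : m ≠ 0) (hs : 0 ≤ s) (hα : -1 ≤ α) (hαs : α < s)
    (hsm : 2 * s ≤ m) (hmα : 2 * (s + 1) ≤ (m + 2) * (s - α)) :
    ∃ D, 0 ≤ D ∧ ∀ G : E → ℝ, Continuous G → (∀ x, 0 ≤ G x) →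
      (∫ x, η x ^ (m + 2) * G x ^ s ∂ν) + C₁ * (∫ x, η x ^ (m + 1) * G x ^ (s + 1 / 2) ∂ν) +
          C₂ * (∫ x, η x ^ m * G x ^ (α + 1) ∂ν) ≤
        1 / 2 * (∫ x, η x ^ (m + 2) * G x ^ (s + 1) ∂ν) + D := by
  have habsorb {C b : ℝ} {i : ℕ} := hη.exists_integral_pow_mul_rpow_le ν (m := i) (n := m + 2)
    (b := b) (t := s + 1) C (show (0 : ℝ) < 1 / 6 by norm_num)
  obtain ⟨D₀, hD₀, habsorb₀⟩ := habsorb (C := 1) (b := s) (i := m + 2) hs (lt_add_one s)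
    (by omega) (by omega) (by push_cast; linarith)
  obtain ⟨D₁, hD₁, habsorb₁⟩ := habsorb (C := C₁) (b := s + 1 / 2) (i := m + 1) (by linarith)
    (by linarith) (by omega) (by omega) (by push_cast; linarith)
  obtain ⟨D₂, hD₂, habsorb₂⟩ := habsorb (C := C₂) (b := α + 1) (i := m) (by linarith)
    (by linarith) hm (by omega) (by push_cast; linarith)
  exact ⟨D₀ + D₁ + D₂, by positivity, fun G hG hG0 => by
    linarith [habsorb₀ G hG hG0, habsorb₁ G hG hG0, habsorb₂ G hG hG0]⟩

lemma mul_integral_pow_mul_rpow_mul_le [IsFiniteMeasureOnCompacts ν] (hη : IsCutoff η)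
    (hn : n ≠ 0) {G a : E → ℝ} (hG : Continuous G) (hG0 : ∀ x, 0 < G x) (ha : Continuous a)
    {q r : ℝ} (hrq : r + q = 2 * s) (C : ℝ) :
    C * ∫ x, η x ^ n * (G x ^ s * a x) ∂ν ≤
      (∫ x, η x ^ n * (G x ^ r * a x ^ 2) ∂ν) + C ^ 2 / 4 * ∫ x, η x ^ n * G x ^ q ∂ν := by
  have hcont (y : ℝ) : Continuous fun x => G x ^ y := hG.rpow_const fun x => .inl (hG0 x).ne'
  have hleft : Integrable (fun x => η x ^ n * (G x ^ s * a x)) ν :=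
    hη.integrable_pow_mul ν hn ((hcont s).mul ha)
  have hsq : Integrable (fun x => η x ^ n * (G x ^ r * a x ^ 2)) ν :=
    hη.integrable_pow_mul ν hn ((hcont r).mul (ha.pow 2))
  have hpow : Integrable (fun x => η x ^ n * G x ^ q) ν := hη.integrable_pow_mul ν hn (hcont q)
  rw [← integral_const_mul, ← integral_const_mul, ← integral_add hsq (hpow.const_mul _)]
  refine integral_mono (hleft.const_mul C) (hsq.add (hpow.const_mul _)) fun x => ?_
  have := mul_le_mul_of_nonneg_left (mul_rpow_mul_le_sq_add C (a x) (hG0 x) hrq)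
    (pow_nonneg (hη.nonneg x) n)
  linarith

end IsCutoff

variable [FiniteDimensional ℝ E] [ν.IsAddHaarMeasure]

lemma integral_pow_mul_rpow_add_one_eq (s : ℝ) (hη : IsCutoff η) (hn : n ≠ 0)
    (hu : ContDiff ℝ 2 u) (v : E) :
    ∫ x, η x ^ n * (1 + ∂[v] u x ^ 2) ^ (s + 1) ∂ν =
      (∫ x, η x ^ n * (1 + ∂[v] u x ^ 2) ^ s ∂ν) +
      ∫ x, -(u x * ∂[v] (cutoffTest n s η (∂[v] u)) x) ∂ν := by
  have hp : ContDiff ℝ 1 (∂[v] u) := contDiff_dirDeriv hu (by norm_num) v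
  have hψ : ContDiff ℝ 1 (cutoffTest n s η (∂[v] u)) :=
    contDiff_cutoffTest (hη.contDiff.of_le one_le_two) hp _ s
  have hψs := hasCompactSupport_cutoffTest (β := s) (p := ∂[v] u) hη.hasCompactSupport hn
  have hpψ : Integrable (fun x => ∂[v] u x * cutoffTest n s η (∂[v] u) x) ν :=
    (hp.continuous.mul hψ.continuous).integrable_of_hasCompactSupport hψs.mul_left
  simp only [pow_mul_rpow_add_one_eq_add_mul_cutoffTest]
  rw [integral_add (hη.integrable_pow_mul ν hn (continuous_one_add_sq_rpow hp.continuous s)) hpψ,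
    integral_neg, integral_mul_dirDeriv_eq_neg ν (hu.of_le one_le_two) hψ hψs, neg_neg]

lemma integral_pow_mul_rpow_add_one_le_add {M : ℝ} (hs : 0 ≤ s) (hη : IsCutoff η) (hm : m ≠ 0)
    (hu : ContDiff ℝ 2 u) (hM : ∀ x ∈ tsupport η, |u x| ≤ M) (hK : ∀ x, |∂[v] η x| ≤ K) :
    ∫ x, η x ^ (m + 1) * (1 + ∂[v] u x ^ 2) ^ (s + 1) ∂ν ≤
      (∫ x, η x ^ (m + 1) * (1 + ∂[v] u x ^ 2) ^ s ∂ν) +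
      M * (1 + 2 * s) *
        (∫ x, η x ^ (m + 1) * ((1 + ∂[v] u x ^ 2) ^ s * |∂[v] (∂[v] u) x|) ∂ν) +
      M * (m + 1) * K * ∫ x, η x ^ m * (1 + ∂[v] u x ^ 2) ^ (s + 1 / 2) ∂ν := by
  have hp : ContDiff ℝ 1 (∂[v] u) := contDiff_dirDeriv hu (by norm_num) v
  have hm1 : m + 1 ≠ 0 := m.succ_ne_zero
  rw [integral_pow_mul_rpow_add_one_eq ν s hη hm1 hu v]
  set p := ∂[v] u
  set ψ := cutoffTest (m + 1) s η p
  have hψ : ContDiff ℝ 1 ψ := contDiff_cutoffTest (hη.contDiff.of_le one_le_two) hp _ s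
  have hψs : HasCompactSupport ψ := hasCompactSupport_cutoffTest hη.hasCompactSupport hm1
  have hΓ := continuous_one_add_sq_rpow hp.continuous
  have hsecond : Integrable (fun x => η x ^ (m + 1) * ((1 + p x ^ 2) ^ s * |∂[v] p x|)) ν :=
    hη.integrable_pow_mul ν hm1 ((hΓ s).mul (continuous_dirDeriv hp v).abs)
  have hlower := hη.integrable_pow_mul ν hm (hΓ (s + 1 / 2))
  have huψ : Integrable (fun x => -(u x * ∂[v] ψ x)) ν :=
    ((hu.continuous.mul (continuous_dirDeriv hψ v)).integrable_of_hasCompactSupport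
      (hasCompactSupport_dirDeriv hψs v).mul_left).neg
  have hbound (x : E) : -(u x * ∂[v] ψ x) ≤
      M * (1 + 2 * s) * (η x ^ (m + 1) * ((1 + p x ^ 2) ^ s * |∂[v] p x|)) +
      M * (m + 1) * K * (η x ^ m * (1 + p x ^ 2) ^ (s + 1 / 2)) := by
    by_cases hx : x ∈ tsupport η
    · exact neg_mul_dirDeriv_cutoffTest_le hs hη (hp.differentiable one_ne_zero x) (hM x hx) (hK x)
    · rw [dirDeriv_eq_zero_of_notMem_tsupport fun h => hx (tsupport_cutoffTest_subset hm1 h),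
        image_eq_zero_of_notMem_tsupport hx]
      simp [hm]
  rw [add_assoc, ← integral_const_mul, ← integral_const_mul,
    ← integral_add (hsecond.const_mul _) (hlower.const_mul _)]
  exact add_le_add_right
    (integral_mono huψ ((hsecond.const_mul _).add (hlower.const_mul _)) hbound) _

end Cutoff

section Splitting

variable {ι : Type*} [Fintype ι] {e : ι → E} {A : ι → ℝ → ℝ} {S : Set E} {η φ : E → ℝ} {m : ℕ}
  {α K Λ lam μ : ℝ} {k : ι}

/-- `u` is a `C³` function that satisfies `∑ᵢ ∂ᵢ(Aᵢ(∂ᵢ u)) = 0` on `S`, written in nondivergence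
form, for `C¹` fluxes `A i` and directions `e i`. This is the Euler equation of a splitting density
`f(ξ) = ∑ᵢ gᵢ(ξᵢ)` with `A i = gᵢ'`. -/
structure IsSplittingSolution (e : ι → E) (A : ι → ℝ → ℝ) (S : Set E) (u : E → ℝ) : Prop where
  contDiff_flux : ∀ i, ContDiff ℝ 1 (A i)
  contDiff : ContDiff ℝ 3 u
  euler : ∀ x ∈ S, ∑ i, deriv (A i) (∂[e i] u x) * ∂[e i] (∂[e i] u) x = 0

/-- The quadratic form `D²f(∇u)(∇∂ᵥu, ∇∂ᵥu)` of a splitting density `f` with fluxes `A i`. -/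
noncomputable def splittingEnergy (e : ι → E) (A : ι → ℝ → ℝ) (u : E → ℝ) (v x : E) : ℝ :=
  ∑ i, deriv (A i) (∂[e i] u x) * ∂[e i] (∂[v] u) x ^ 2

lemma mul_rpow_mul_sq_le_splittingEnergy (hA : ∀ i t, 0 ≤ deriv (A i) t)
    (hAk : ∀ t, lam * (1 + t ^ 2) ^ (-μ / 2) ≤ deriv (A k) t) (u : E → ℝ) (v x : E) :
    lam * (1 + ∂[e k] u x ^ 2) ^ (-μ / 2) * ∂[e k] (∂[v] u) x ^ 2 ≤ splittingEnergy e A u v x :=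
  calc lam * (1 + ∂[e k] u x ^ 2) ^ (-μ / 2) * ∂[e k] (∂[v] u) x ^ 2
      ≤ deriv (A k) (∂[e k] u x) * ∂[e k] (∂[v] u) x ^ 2 := by
        gcongr
        exact hAk _
    _ ≤ splittingEnergy e A u v x :=
        Finset.single_le_sum (f := fun i => deriv (A i) (∂[e i] u x) * ∂[e i] (∂[v] u) x ^ 2)
          (fun i _ => mul_nonneg (hA i _) (sq_nonneg _)) (Finset.mem_univ k)

lemma splittingEnergy_caccioppoli_pointwise (hu : ContDiff ℝ 3 u)
    (hAΛ : ∀ i t, deriv (A i) t ∈ Set.Icc 0 Λ) (hη : IsCutoff η)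
    (hK : ∀ i x, |∂[e i] η x| ≤ K) (hα : -1 / 2 < α) (v x : E) :
    min 1 (1 + 2 * α) ^ 2 *
        (η x ^ (m + 2) * ((1 + ∂[v] u x ^ 2) ^ α * splittingEnergy e A u v x)) ≤
      2 * min 1 (1 + 2 * α) * (∑ i, deriv (A i) (∂[e i] u x) * ∂[e i] (∂[v] u) x *
        ∂[e i] (cutoffTest (m + 2) α η (∂[v] u)) x) +
      Fintype.card ι * (Λ * ((m + 2) * K) ^ 2) *
        (η x ^ m * (1 + ∂[v] u x ^ 2) ^ (α + 1)) := by
  have hp : ContDiff ℝ 2 (∂[v] u) := contDiff_dirDeriv hu (by norm_num) v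
  rw [mul_assoc (Fintype.card ι : ℝ), ← nsmul_eq_mul, ← Finset.card_univ, ← Finset.sum_const]
  simp only [splittingEnergy, Finset.mul_sum, ← Finset.sum_add_distrib]
  gcongr with i
  rw [dirDeriv_cutoffTest (n := m + 1) (hη.contDiff.differentiable two_ne_zero x)
    (hp.differentiable two_ne_zero x)]
  push_cast
  linear_combination caccioppoli_pointwise (m := m) (p := ∂[v] u x) (a := ∂[e i] (∂[v] u) x) hα
    (hAΛ i (∂[e i] u x)).1 (hAΛ i _).2 (hη.nonneg x) (hK i x)

namespace IsSplittingSolution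

lemma mono {T : Set E} (hu : IsSplittingSolution e A S u) (hTS : T ⊆ S) :
    IsSplittingSolution e A T u :=
  ⟨hu.contDiff_flux, hu.contDiff, fun x hx => hu.euler x (hTS hx)⟩

lemma contDiff_two_dirDeriv (hu : IsSplittingSolution e A S u) (v : E) : ContDiff ℝ 2 (∂[v] u) :=
  contDiff_dirDeriv hu.contDiff (by norm_num) v

lemma continuous_second_dirDeriv (hu : IsSplittingSolution e A S u) (v w : E) :
    Continuous (∂[w] (∂[v] u)) :=
  continuous_dirDeriv ((hu.contDiff_two_dirDeriv v).of_le one_le_two) w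

lemma continuous_deriv_flux (hu : IsSplittingSolution e A S u) (i : ι) :
    Continuous fun x => deriv (A i) (∂[e i] u x) :=
  ((hu.contDiff_flux i).continuous_deriv le_rfl).comp (hu.contDiff_two_dirDeriv _).continuous

lemma continuous_splittingEnergy (hu : IsSplittingSolution e A S u) (v : E) :
    Continuous (splittingEnergy e A u v) :=
  continuous_finsetSum _ fun i _ =>
    (hu.continuous_deriv_flux i).mul ((hu.continuous_second_dirDeriv v _).pow 2)

variable [FiniteDimensional ℝ E] [MeasurableSpace E] [BorelSpace E] (ν : Measure E)
  [ν.IsAddHaarMeasure]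

lemma integral_linearized_eq_zero (hu : IsSplittingSolution e A (tsupport φ) u)
    (hφ : ContDiff ℝ 2 φ) (hφs : HasCompactSupport φ) (v : E) :
    ∫ x, ∑ i, deriv (A i) (∂[e i] u x) * ∂[e i] (∂[v] u) x * ∂[e i] φ x ∂ν = 0 := by
  have hp (i : ι) : ContDiff ℝ 1 (∂[e i] u) := (hu.contDiff_two_dirDeriv _).of_le one_le_two
  have hflux (i : ι) (w x : E) : ∂[w] (fun y => A i (∂[e i] u y)) x =
      deriv (A i) (∂[e i] u x) * ∂[w] (∂[e i] u) x :=
    dirDeriv_comp ((hu.contDiff_flux i).differentiable one_ne_zero _).hasDerivAt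
      ((hp i).differentiable one_ne_zero x)
  have hcomm (i : ι) (x : E) : ∂[e i] (∂[v] u) x = ∂[v] (∂[e i] u) x :=
    dirDeriv_comm (hu.contDiff.of_le (by norm_num)) _ _ x
  simp only [hcomm, ← hflux]
  exact integral_sum_dirDeriv_mul_dirDeriv_eq_zero ν (F := fun i y => A i (∂[e i] u y))
    (fun i => (hu.contDiff_flux i).comp (hp i)) hφ hφs
    (fun x hx => (Finset.sum_congr rfl fun i _ => hflux i _ x).trans (hu.euler x hx)) v

lemma caccioppoli (hu : IsSplittingSolution e A (tsupport η) u)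
    (hAΛ : ∀ i t, deriv (A i) t ∈ Set.Icc 0 Λ) (hη : IsCutoff η) (hm : m ≠ 0)
    (hK : ∀ i x, |∂[e i] η x| ≤ K) (hα : -1 / 2 < α) (v : E) :
    min 1 (1 + 2 * α) ^ 2 *
        ∫ x, η x ^ (m + 2) * ((1 + ∂[v] u x ^ 2) ^ α * splittingEnergy e A u v x) ∂ν ≤
      Fintype.card ι * (Λ * ((m + 2) * K) ^ 2) *
        ∫ x, η x ^ m * (1 + ∂[v] u x ^ 2) ^ (α + 1) ∂ν := by
  have hm2 : m + 2 ≠ 0 := by omega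
  set p := ∂[v] u
  set φ := cutoffTest (m + 2) α η p
  have hp : ContDiff ℝ 2 p := hu.contDiff_two_dirDeriv v
  have hφ : ContDiff ℝ 2 φ := contDiff_cutoffTest hη.contDiff hp _ α
  have hφs : HasCompactSupport φ := hasCompactSupport_cutoffTest hη.hasCompactSupport hm2
  have hweak : ∫ x, ∑ i, deriv (A i) (∂[e i] u x) * ∂[e i] p x * ∂[e i] φ x ∂ν = 0 :=
    (hu.mono (tsupport_cutoffTest_subset hm2)).integral_linearized_eq_zero ν hφ hφs v
  have hlin : Integrable
      (fun x => ∑ i, deriv (A i) (∂[e i] u x) * ∂[e i] p x * ∂[e i] φ x) ν :=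
    integrable_finsetSum _ fun i _ =>
      (((hu.continuous_deriv_flux i).mul (hu.continuous_second_dirDeriv v _)).mul
        (continuous_dirDeriv (hφ.of_le one_le_two) _)).integrable_of_hasCompactSupport
        (hasCompactSupport_dirDeriv hφs _).mul_left
  have hΓ := continuous_one_add_sq_rpow hp.continuous
  have henergy : Integrable
      (fun x => η x ^ (m + 2) * ((1 + p x ^ 2) ^ α * splittingEnergy e A u v x)) ν :=
    hη.integrable_pow_mul ν hm2 ((hΓ α).mul (hu.continuous_splittingEnergy v))
  have hlower := hη.integrable_pow_mul ν hm (hΓ (α + 1))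
  have := integral_mono (henergy.const_mul _) ((hlin.const_mul _).add (hlower.const_mul _))
    (splittingEnergy_caccioppoli_pointwise (m := m) hu.contDiff hAΛ hη hK hα v)
  simpa only [Pi.add_apply, integral_add (hlin.const_mul _) (hlower.const_mul _),
    integral_const_mul, hweak, mul_zero, zero_add] using this

lemma integral_second_dirDeriv_sq_le
    (hu : IsSplittingSolution e A (tsupport η) u) (hlam : 0 < lam)
    (hAΛ : ∀ i t, deriv (A i) t ∈ Set.Icc 0 Λ)
    (hAk : ∀ t, lam * (1 + t ^ 2) ^ (-μ / 2) ≤ deriv (A k) t) (hη : IsCutoff η) (hm : m ≠ 0)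
    (hK : ∀ i x, |∂[e i] η x| ≤ K) (hα : -1 / 2 < α) :
    ∫ x, η x ^ (m + 2) * ((1 + ∂[e k] u x ^ 2) ^ (α - μ / 2) * ∂[e k] (∂[e k] u) x ^ 2) ∂ν ≤
      Fintype.card ι * (Λ * ((m + 2) * K) ^ 2) / (lam * min 1 (1 + 2 * α) ^ 2) *
        ∫ x, η x ^ m * (1 + ∂[e k] u x ^ 2) ^ (α + 1) ∂ν := by
  have hm2 : m + 2 ≠ 0 := by omega
  have hκ : 0 < min 1 (1 + 2 * α) := lt_min one_pos (by linarith)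
  have hcacc := hu.caccioppoli ν hAΛ hη hm hK hα (e k)
  have hΓ := continuous_one_add_sq_rpow (hu.contDiff_two_dirDeriv (e k)).continuous
  set p := ∂[e k] u
  have hcoercive (x : E) :
      lam * (η x ^ (m + 2) * ((1 + p x ^ 2) ^ (α - μ / 2) * ∂[e k] p x ^ 2)) ≤
        η x ^ (m + 2) * ((1 + p x ^ 2) ^ α * splittingEnergy e A u (e k) x) := by
    have hη0 := hη.nonneg x
    calc lam * (η x ^ (m + 2) * ((1 + p x ^ 2) ^ (α - μ / 2) * ∂[e k] p x ^ 2))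
        = η x ^ (m + 2) *
            ((1 + p x ^ 2) ^ α * (lam * (1 + p x ^ 2) ^ (-μ / 2) * ∂[e k] p x ^ 2)) := by
          rw [show α - μ / 2 = α + -μ / 2 by ring, rpow_add (by positivity)]
          ring
      _ ≤ _ := by
          gcongr
          exact mul_rpow_mul_sq_le_splittingEnergy (fun i t => (hAΛ i t).1) hAk u (e k) x
  have hmono := integral_mono ((hη.integrable_pow_mul ν hm2 ((hΓ (α - μ / 2)).mul
    ((hu.continuous_second_dirDeriv _ _).pow 2))).const_mul lam)
    (hη.integrable_pow_mul ν hm2 ((hΓ α).mul (hu.continuous_splittingEnergy (e k)))) hcoercive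
  rw [integral_const_mul] at hmono
  rw [div_mul_eq_mul_div, le_div_iff₀' (by positivity), mul_comm lam, mul_assoc]
  exact (mul_le_mul_of_nonneg_left hmono (by positivity)).trans hcacc

lemma integral_pow_mul_rpow_add_one_le {M s : ℝ}
    (hu : IsSplittingSolution e A (tsupport η) u) (hM : ∀ x ∈ tsupport η, |u x| ≤ M)
    (hlam : 0 < lam) (hAΛ : ∀ i t, deriv (A i) t ∈ Set.Icc 0 Λ)
    (hAk : ∀ t, lam * (1 + t ^ 2) ^ (-μ / 2) ≤ deriv (A k) t) (hη : IsCutoff η) (hm : m ≠ 0)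
    (hK : ∀ i x, |∂[e i] η x| ≤ K) (hs : 0 ≤ s) (hα : -1 / 2 < α) :
    ∫ x, η x ^ (m + 2) * (1 + ∂[e k] u x ^ 2) ^ (s + 1) ∂ν ≤
      (∫ x, η x ^ (m + 2) * (1 + ∂[e k] u x ^ 2) ^ s ∂ν) +
      M * (m + 2) * K * (∫ x, η x ^ (m + 1) * (1 + ∂[e k] u x ^ 2) ^ (s + 1 / 2) ∂ν) +
      Fintype.card ι * (Λ * ((m + 2) * K) ^ 2) / (lam * min 1 (1 + 2 * α) ^ 2) *
        (∫ x, η x ^ m * (1 + ∂[e k] u x ^ 2) ^ (α + 1) ∂ν) +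
      (M * (1 + 2 * s)) ^ 2 / 4 *
        ∫ x, η x ^ (m + 2) * (1 + ∂[e k] u x ^ 2) ^ (2 * s - α + μ / 2) ∂ν := by
  have hm2 : m + 2 ≠ 0 := by omega
  have hp := (hu.contDiff_two_dirDeriv (e k)).continuous
  have hzeroth := integral_pow_mul_rpow_add_one_le_add ν hs hη (m := m + 1) (by omega)
    (hu.contDiff.of_le (by norm_num)) hM (hK k)
  have hyoung := hη.mul_integral_pow_mul_rpow_mul_le ν hm2 (G := fun x => 1 + ∂[e k] u x ^ 2)
    (continuous_const.add (hp.pow 2)) (fun x => by positivity)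
    (hu.continuous_second_dirDeriv (e k) (e k)).abs
    (show α - μ / 2 + (2 * s - α + μ / 2) = 2 * s by ring) (M * (1 + 2 * s))
  have hcacc := hu.integral_second_dirDeriv_sq_le ν hlam hAΛ hAk hη hm hK hα
  simp only [sq_abs] at hyoung
  push_cast [add_assoc, one_add_one_eq_two] at hzeroth
  linarith

end IsSplittingSolution

theorem higher_integrability_iteration_general [FiniteDimensional ℝ E] [MeasurableSpace E]
    [BorelSpace E] (ν : Measure E) [ν.IsAddHaarMeasure] (e : ι → E) (k : ι) {M s : ℝ} {n : ℕ}
    (hlam : 0 < lam) (hs : 0 ≤ s) (hα : -1 / 2 < α) (hαs : α < s) (hn : 2 * (s + 1) ≤ n)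
    (hnα : 2 * (s + 1) ≤ n * (s - α)) (hη : IsCutoff η) :
    ∃ c, 0 < c ∧ ∀ (A : ι → ℝ → ℝ) (u : E → ℝ), (∀ i t, deriv (A i) t ∈ Set.Icc 0 Λ) →
      (∀ t, lam * (1 + t ^ 2) ^ (-μ / 2) ≤ deriv (A k) t) →
      IsSplittingSolution e A (tsupport η) u → (∀ x ∈ tsupport η, |u x| ≤ M) →
      ∫ x, η x ^ n * (1 + ∂[e k] u x ^ 2) ^ (s + 1) ∂ν ≤
        c * (1 + ∫ x, η x ^ n * (1 + ∂[e k] u x ^ 2) ^ (2 * s - α + μ / 2) ∂ν) := by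
  obtain ⟨m, rfl⟩ : ∃ m, n = m + 2 :=
    Nat.exists_eq_add_of_le' (by exact_mod_cast (show (2 : ℝ) ≤ n by linarith))
  push_cast at hn hnα
  have hm : m ≠ 0 := by
    rintro rfl
    norm_num at hnα
    linarith
  obtain ⟨K, hK⟩ := exists_abs_dirDeriv_le (hη.contDiff.of_le one_le_two) hη.hasCompactSupport e
  obtain ⟨D, hD, habsorb⟩ := hη.exists_lowerOrder_integral_le ν (M * (m + 2) * K)
    (Fintype.card ι * (Λ * ((m + 2) * K) ^ 2) / (lam * min 1 (1 + 2 * α) ^ 2)) hm hs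
    (by linarith) hαs (by linarith) hnα
  refine ⟨2 * D + (M * (1 + 2 * s)) ^ 2 / 2 + 1, by positivity, fun A u hAΛ hAk hu hM => ?_⟩
  have hΓ : Continuous fun x => 1 + ∂[e k] u x ^ 2 :=
    continuous_const.add ((hu.contDiff_two_dirDeriv (e k)).continuous.pow 2)
  have hR : 0 ≤ ∫ x, η x ^ (m + 2) * (1 + ∂[e k] u x ^ 2) ^ (2 * s - α + μ / 2) ∂ν :=
    integral_nonneg fun x => mul_nonneg (pow_nonneg (hη.nonneg x) _) (by positivity)
  have hDR := mul_nonneg (show 0 ≤ 2 * D + 1 by positivity) hR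
  linarith [hu.integral_pow_mul_rpow_add_one_le ν hM hlam hAΛ hAk hη hm hK hs hα,
    habsorb _ hΓ fun x => by positivity, sq_nonneg (M * (1 + 2 * s))]

end Splitting

section RegularizedFlux

/-- The flux `δ t + f'(t)` of the regularized density `(δ / 2) t² + f(t)`. -/
noncomputable def regularizedFlux (δ : ℝ) (f : ℝ → ℝ) (t : ℝ) : ℝ :=
  δ * t + deriv f t

variable {f : ℝ → ℝ} {c δ μ : ℝ}

lemma contDiff_regularizedFlux (hf : ContDiff ℝ 2 f) (δ : ℝ) :
    ContDiff ℝ 1 (regularizedFlux δ f) :=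
  (contDiff_const.mul contDiff_id).add ((contDiff_succ_iff_deriv (n := 1)).1 hf).2.2

lemma deriv_regularizedFlux (hf : ContDiff ℝ 2 f) (δ t : ℝ) :
    deriv (regularizedFlux δ f) t = δ + deriv (deriv f) t := by
  have hf' : DifferentiableAt ℝ (deriv f) t :=
    (((contDiff_succ_iff_deriv (n := 1)).1 hf).2.2.differentiable one_ne_zero) t
  have hflux : HasDerivAt (regularizedFlux δ f) (δ * 1 + deriv (deriv f) t) t :=
    ((hasDerivAt_id t).const_mul δ).add hf'.hasDerivAt
  rw [hflux.deriv, mul_one]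

lemma rpow_le_deriv_regularizedFlux (hf : ContDiff ℝ 2 f) (hδ : 0 ≤ δ) (hc : 0 ≤ c) (hμ : 0 < μ)
    (hell : ∀ t, c * (1 + |t|) ^ (-μ) ≤ deriv (deriv f) t) (t : ℝ) :
    c / 2 ^ (μ / 2) * (1 + t ^ 2) ^ (-μ / 2) ≤ deriv (regularizedFlux δ f) t :=
  calc c / 2 ^ (μ / 2) * (1 + t ^ 2) ^ (-μ / 2)
      ≤ c / 2 ^ (μ / 2) * (2 ^ (μ / 2) * (1 + |t|) ^ (-μ)) := by
        gcongr
        simpa using rpow_neg_one_add_norm_sq_le t hμ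
    _ = c * (1 + |t|) ^ (-μ) := by field_simp
    _ ≤ deriv (regularizedFlux δ f) t := by
        rw [deriv_regularizedFlux hf]
        linarith [hell t]

lemma deriv_regularizedFlux_mem_Icc {C Λ : ℝ} (hf : ContDiff ℝ 2 f) (hδ : δ ∈ Set.Icc 0 1)
    (hc : 0 ≤ c) (hell : ∀ t, c * (1 + |t|) ^ (-μ) ≤ deriv (deriv f) t ∧ deriv (deriv f) t ≤ C)
    (hC : C ≤ Λ) (t : ℝ) : deriv (regularizedFlux δ f) t ∈ Set.Icc 0 (1 + Λ) := by
  have hconvex : 0 ≤ deriv (deriv f) t := le_trans (by positivity) (hell t).1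
  rw [deriv_regularizedFlux hf]
  exact ⟨add_nonneg hδ.1 hconvex, add_le_add hδ.2 ((hell t).2.trans hC)⟩

lemma isSplittingSolution_regularizedFlux {ι : Type*} [Fintype ι] {e : ι → E} {f : ι → ℝ → ℝ}
    {S : Set E} (hf : ∀ i, ContDiff ℝ 2 (f i)) (hu : ContDiff ℝ 3 u)
    (heuler : ∀ x ∈ S, ∑ i, (δ + deriv (deriv (f i)) (∂[e i] u x)) * ∂[e i] (∂[e i] u) x = 0) :
    IsSplittingSolution e (fun i => regularizedFlux δ (f i)) S u where
  contDiff_flux i := contDiff_regularizedFlux (hf i) δ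
  contDiff := hu
  euler x hx := by simpa only [deriv_regularizedFlux (hf _)] using heuler x hx

end RegularizedFlux

end DirectionalDerivative

lemma isSplittingSolution_plane {f₁ f₂ : ℝ → ℝ} {δ : ℝ} {S : Set (EuclideanSpace ℝ (Fin 2))}
    {u : EuclideanSpace ℝ (Fin 2) → ℝ} (hf₁ : ContDiff ℝ 2 f₁) (hf₂ : ContDiff ℝ 2 f₂)
    (hu : ContDiff ℝ 3 u)
    (heuler : ∀ x ∈ S, δ * (pd 0 (pd 0 u) x + pd 1 (pd 1 u) x) +
      deriv (deriv f₁) (pd 0 u x) * pd 0 (pd 0 u) x +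
      deriv (deriv f₂) (pd 1 u x) * pd 1 (pd 1 u) x = 0) :
    IsSplittingSolution (fun i => EuclideanSpace.single i 1)
      (fun i => regularizedFlux δ (![f₁, f₂] i)) S u := by
  refine isSplittingSolution_regularizedFlux (Fin.forall_fin_two.2 ⟨hf₁, hf₂⟩) hu fun x hx => ?_
  rw [Fin.sum_univ_two]
  change (δ + deriv (deriv f₁) (pd 0 u x)) * pd 0 (pd 0 u) x +
    (δ + deriv (deriv f₂) (pd 1 u x)) * pd 1 (pd 1 u) x = 0
  linarith [heuler x hx]

/-- higher-integrability iteration: in the splitting setting with `μ₁ < 2` and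
`|u| ≤ M`, for `χ > 2`, `s = χ/2 - 1`, `ε̂ = 1 - μ₁/2`, `α = s - ε̂/2 ≥ 0`, and `l`
sufficiently large: `∫ η^{2l} Γ₁^{s+1} ≤ c [1 + ∫ η^{2l} Γ₁^{s+(2+μ₁)/4}]`. -/
theorem higher_integrability_iteration
    (Ω : Set (EuclideanSpace ℝ (Fin 2))) (hΩo : IsOpen Ω) (hΩb : Bornology.IsBounded Ω)
    (f₁ f₂ : ℝ → ℝ) (hf₁ : ContDiff ℝ 2 f₁) (hf₂ : ContDiff ℝ 2 f₂)
    (c₁ c₂ cb₁ cb₂ μ₁ μ₂ : ℝ)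
    (hc₁ : 0 < c₁) (hc₂ : 0 < c₂) (hcb₁ : 0 < cb₁) (hcb₂ : 0 < cb₂)
    (hμ₁ : 1 < μ₁) (hμ₂ : 1 < μ₂) (hμ₁' : μ₁ < 2)
    (hell₁ : ∀ t : ℝ, c₁ * (1 + |t|) ^ (-μ₁) ≤ deriv (deriv f₁) t ∧ deriv (deriv f₁) t ≤ cb₁)
    (hell₂ : ∀ t : ℝ, c₂ * (1 + |t|) ^ (-μ₂) ≤ deriv (deriv f₂) t ∧ deriv (deriv f₂) t ≤ cb₂)
    (M : ℝ) (hM : 0 < M)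
    (χ s ε' α : ℝ) (hχ : 2 < χ) (hs : s = χ / 2 - 1) (hε' : ε' = 1 - μ₁ / 2)
    (hαdef : α = s - ε' / 2) (hα : 0 ≤ α) :
    ∃ l₀ : ℕ, 1 ≤ l₀ ∧
      ∀ (l : ℕ), l₀ ≤ l →
      ∀ (η : EuclideanSpace ℝ (Fin 2) → ℝ), ContDiff ℝ (⊤ : ℕ∞) η →
        HasCompactSupport η → tsupport η ⊆ Ω →
        (∀ x, 0 ≤ η x) → (∀ x, η x ≤ 1) →
      ∃ c : ℝ, 0 < c ∧
        ∀ (δ : ℝ), 0 < δ → δ ≤ 1 →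
        ∀ (u : EuclideanSpace ℝ (Fin 2) → ℝ), ContDiff ℝ (⊤ : ℕ∞) u →
        (∀ x ∈ Ω, |u x| ≤ M) →
        (∀ x ∈ Ω, δ * (pd 0 (pd 0 u) x + pd 1 (pd 1 u) x)
            + deriv (deriv f₁) (pd 0 u x) * pd 0 (pd 0 u) x
            + deriv (deriv f₂) (pd 1 u x) * pd 1 (pd 1 u) x = 0) →
        (∫ x in Ω, η x ^ (2 * l) * (1 + (pd 0 u x) ^ 2) ^ (s + 1))
          ≤ c * (1 + ∫ x in Ω,
              η x ^ (2 * l) * (1 + (pd 0 u x) ^ 2) ^ (s + (2 + μ₁) / 4)) := by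
  have hε0 : 0 < ε' := by linarith
  have hs0 : 0 ≤ s := by linarith
  have hceil : 1 ≤ ⌈2 * (s + 1) / ε'⌉₊ := Nat.one_le_ceil_iff.2 (by positivity)
  refine ⟨_, hceil, fun l hl η hη hηs hηΩ hη0 hη1 => ?_⟩
  have hlε : 2 * (s + 1) ≤ l * ε' := (div_le_iff₀ hε0).1 (Nat.ceil_le.1 hl)
  have hl2 : 2 * (s + 1) ≤ 2 * l := by nlinarith
  have hl0 : 2 * l ≠ 0 := by omega
  obtain ⟨c, hc, hbound⟩ := higher_integrability_iteration_general (n := 2 * l) (M := M) (μ := μ₁)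
    (Λ := 1 + max cb₁ cb₂) (α := α) volume (fun i : Fin 2 => EuclideanSpace.single i (1 : ℝ)) 0
    (show 0 < c₁ / 2 ^ (μ₁ / 2) by positivity) hs0 (by linarith) (by linarith)
    (by push_cast; exact hl2) (by push_cast; rw [hαdef]; linarith)
    ⟨contDiff_infty.1 hη 2, hηs, hη0, hη1⟩
  refine ⟨c, hc, fun δ hδ hδ1 u hu huM heuler => ?_⟩
  rw [setIntegral_pow_mul_eq_integral _ hηΩ hl0, setIntegral_pow_mul_eq_integral _ hηΩ hl0,
    show s + (2 + μ₁) / 4 = 2 * s - α + μ₁ / 2 by linarith]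
  exact hbound _ u
    (Fin.forall_fin_two.2
      ⟨deriv_regularizedFlux_mem_Icc hf₁ ⟨hδ.le, hδ1⟩ hc₁.le hell₁ (le_max_left _ _),
        deriv_regularizedFlux_mem_Icc hf₂ ⟨hδ.le, hδ1⟩ hc₂.le hell₂ (le_max_right _ _)⟩)
    (rpow_le_deriv_regularizedFlux hf₁ hδ.le hc₁.le (by linarith) fun t => (hell₁ t).1)
    ((isSplittingSolution_plane hf₁ hf₂ (contDiff_infty.1 hu 3) heuler).mono hηΩ)
    fun x hx => huM x (hηΩ hx)
end

section
/- In the modified splitting setting described below, assume additionally |u| ≤ M on Ω for some M > 0, and let τ_s, τ_α > 0 with s := −1/2 + τ_s and α := −1/2 + τ_α. Then for every integer l ≥ 1 and every η ∈ C_c^∞(Ω) with 0 ≤ η ≤ 1 there is a constant c > 0 depending on η, l, M and the structural constants but not on δ or u, such that ∫_Ω η^{2l} Γ₁^{s+1} dx ≤ c [ 1 + ∫_Ω |∇η|² η^{2l−2} Γ₁^{α+1} dx + ∫_Ω |∇η|² η^{2l−2} Γ₁^{(α+1)/(1−γ)} dx + ∫_Ω η^{2l} Γ₁^{2s − α + μ₁/2}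 dx ]. -/
open Real MeasureTheory

/-!
Write `Γ = 1 + (∂₁u)²`. Testing the differentiated Euler equation with `η^{2l} Γ^α ∂₁u` gives a
Caccioppoli inequality even for negative `α`, because `t ↦ (1 + t²)^α t` has a derivative of size
`(1 + t²)^α` as soon as `1 + 2α > 0`. On its right-hand side `f₁''` is bounded and `f₂''` grows like
`(1 + |∂₂u|)^γ`; Young's inequality splits `(1 + |∂₂u|)^γ Γ^{α+1}` into `Γ^{(α+1)/(1-γ)}` and
`1 + |∂₂u|`. The local `L¹` norm of `∂₂u` is controlled by testing the Euler equation itself with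
`u ψ³`: since `u` is bounded, the contribution of `∇ψ` is absorbed where `ψ |∂ᵢu|` is large and is
bounded where it is small. Finally `∫ η^{2l} Γ^s (∂₁u)²` is integrated by parts once, moving a
derivative away from the bounded function `u`, and the second derivatives that appear are weighted
by `f₁'' ≥ c Γ^{-μ/2}` to match the Caccioppoli inequality.
-/

local notation "ℝ²" => EuclideanSpace ℝ (Fin 2)

section PartialDerivatives

variable {v w : ℝ² → ℝ} {x : ℝ²} (i : Fin 2)

lemma pd_mul (hv : DifferentiableAt ℝ v x) (hw : DifferentiableAt ℝ w x) :
    pd i (fun y => v y * w y) x = v x * pd i w x + pd i v x * w x := by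
  simp [pd, fderiv_fun_mul hv hw, mul_comm]

lemma pd_comp {h : ℝ → ℝ} {h' : ℝ} (hv : DifferentiableAt ℝ v x) (hh : HasDerivAt h h' (v x)) :
    pd i (fun y => h (v y)) x = h' * pd i v x := by
  have : HasFDerivAt (fun y => h (v y)) (h' • fderiv ℝ v x) x :=
    hh.comp_hasFDerivAt x hv.hasFDerivAt
  simp [pd, this.fderiv]

lemma pd_pow (n : ℕ) (hv : DifferentiableAt ℝ v x) :
    pd i (fun y => v y ^ n) x = n * v x ^ (n - 1) * pd i v x :=
  pd_comp i hv (hasDerivAt_pow n (v x))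

lemma contDiff_pd {m n : WithTop ℕ∞} (hv : ContDiff ℝ n v) (hmn : m + 1 ≤ n) :
    ContDiff ℝ m (pd i v) :=
  (hv.fderiv_right hmn).clm_apply contDiff_const

lemma continuous_pd (hv : ContDiff ℝ 1 v) : Continuous (pd i v) :=
  (contDiff_pd (m := 0) i hv (by simp)).continuous

lemma pd_comm (hv : ContDiff ℝ 2 v) (i j : Fin 2) (x : ℝ²) :
    pd i (pd j v) x = pd j (pd i v) x := by
  have hd : DifferentiableAt ℝ (fderiv ℝ v) x :=
    (hv.fderiv_right (m := 1) one_add_one_eq_two.le).differentiable one_ne_zero x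
  have pd_pd_eq (i j : Fin 2) : pd i (pd j v) x =
      fderiv ℝ (fderiv ℝ v) x (EuclideanSpace.single i 1) (EuclideanSpace.single j 1) := by
    unfold pd
    simp [fderiv_clm_apply hd (differentiableAt_const _)]
  rw [pd_pd_eq, pd_pd_eq]
  exact hv.contDiffAt.isSymmSndFDerivAt (by simp) _ _

lemma tsupport_pd_subset : tsupport (pd i v) ⊆ tsupport v :=
  tsupport_fderiv_apply_subset ℝ _

lemma pd_eq_zero_of_notMem_tsupport (hx : x ∉ tsupport v) : pd i v x = 0 :=
  image_eq_zero_of_notMem_tsupport fun h => hx (tsupport_pd_subset i h)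

lemma hasCompactSupport_pd (hv : HasCompactSupport v) : HasCompactSupport (pd i v) :=
  hv.fderiv_apply ℝ _

lemma integrable_of_eq_zero_off_tsupport (hv : HasCompactSupport v) (hw : Continuous w)
    (h : ∀ x ∉ tsupport v, w x = 0) : Integrable w :=
  hw.integrable_of_hasCompactSupport (HasCompactSupport.intro hv h)

lemma integral_mul_pd (hv : ContDiff ℝ 1 v) (hw : ContDiff ℝ 1 w) (hwc : HasCompactSupport w) :
    ∫ x, v x * pd i w x = -∫ x, pd i v x * w x := by
  have hv' := continuous_pd i hv
  have hw' := continuous_pd i hw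
  exact integral_mul_fderiv_eq_neg_fderiv_mul_of_integrable
    ((hv'.mul hw.continuous).integrable_of_hasCompactSupport hwc.mul_left)
    ((hv.continuous.mul hw').integrable_of_hasCompactSupport (hasCompactSupport_pd i hwc).mul_left)
    ((hv.continuous.mul hw.continuous).integrable_of_hasCompactSupport hwc.mul_left)
    (fun x _ => hv.differentiable one_ne_zero x) (fun x _ => hw.differentiable one_ne_zero x)

end PartialDerivatives

section Primitive

variable {a : ℝ → ℝ}

/-- The antiderivative of the coefficient `a` vanishing at `0`. For `a = f''` this is the flux
`f' - f' 0` of the Euler equation, normalised so that it has the sign of its argument. -/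
noncomputable def primitive (a : ℝ → ℝ) (t : ℝ) : ℝ := ∫ r in (0 : ℝ)..t, a r

@[simp]
lemma primitive_zero : primitive a 0 = 0 := intervalIntegral.integral_same

lemma hasDerivAt_primitive (ha : Continuous a) (t : ℝ) : HasDerivAt (primitive a) (a t) t :=
  ha.integral_hasStrictDerivAt 0 t |>.hasDerivAt

lemma contDiff_primitive (ha : Continuous a) : ContDiff ℝ 1 (primitive a) := by
  rw [contDiff_one_iff_deriv, funext fun t => (hasDerivAt_primitive ha t).deriv]
  exact ⟨fun t => (hasDerivAt_primitive ha t).differentiableAt, ha⟩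

lemma monotone_primitive (ha : Continuous a) (ha0 : ∀ t, 0 ≤ a t) : Monotone (primitive a) :=
  monotone_of_hasDerivAt_nonneg (hasDerivAt_primitive ha) ha0

lemma primitive_mul_self (ha : Continuous a) (ha0 : ∀ t, 0 ≤ a t) (t : ℝ) :
    primitive a t * t = |primitive a t| * |t| := by
  rw [← abs_mul, abs_of_nonneg]
  rcases le_total 0 t with ht | ht
  · exact mul_nonneg (primitive_zero (a := a) ▸ monotone_primitive ha ha0 ht) ht
  · exact mul_nonneg_of_nonpos_of_nonpos (primitive_zero (a := a) ▸ monotone_primitive ha ha0 ht) ht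

lemma abs_primitive_le {C : ℝ} (ha0 : ∀ t, 0 ≤ a t) (ha : ∀ t, a t ≤ C * (1 + |t|)) (hC : 0 ≤ C)
    (t : ℝ) : |primitive a t| ≤ C * (1 + |t|) * |t| := by
  have hbound : ∀ r ∈ Set.uIoc 0 t, ‖a r‖ ≤ C * (1 + |t|) := fun r hr => by
    have hrt : |r| ≤ |t| := by simpa using Set.abs_sub_left_of_mem_uIcc (Set.uIoc_subset_uIcc hr)
    calc ‖a r‖ = a r := by rw [norm_eq_abs, abs_of_nonneg (ha0 r)]
      _ ≤ C * (1 + |r|) := ha r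
      _ ≤ C * (1 + |t|) := by gcongr
  simpa [primitive] using intervalIntegral.norm_integral_le_of_norm_le_const hbound

lemma mul_abs_sub_one_le_primitive_mul_self {m : ℝ} (ha : Continuous a) (ha0 : ∀ t, 0 ≤ a t)
    (hm : 0 ≤ m) (ham : ∀ t, |t| ≤ 1 → m ≤ a t) (t : ℝ) :
    m * (|t| - 1) ≤ primitive a t * t := by
  have growth (x y : ℝ) (hx : x ∈ Set.Icc (-1 : ℝ) 1) (hy : y ∈ Set.Icc (-1 : ℝ) 1)
      (hxy : x ≤ y) : m * (y - x) ≤ primitive a y - primitive a x :=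
    (convex_Icc (-1) 1).mul_sub_le_image_sub_of_le_deriv
      (contDiff_primitive ha).continuous.continuousOn
      (fun t _ => (hasDerivAt_primitive ha t).differentiableAt.differentiableWithinAt)
      (fun t ht => (hasDerivAt_primitive ha t).deriv ▸
        ham t (abs_le.2 (interior_subset (s := Set.Icc _ _) ht))) x hx y hy hxy
  have mono := monotone_primitive ha ha0
  have h0 := primitive_zero (a := a)
  rcases le_total |t| 1 with ht | ht
  · rw [primitive_mul_self ha ha0]
    exact (mul_nonpos_of_nonneg_of_nonpos hm (by linarith)).trans (by positivity)
  rcases le_abs'.1 ht with ht' | ht'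
  · have hflux : primitive a t ≤ -m := by
      linarith [mono ht', growth (-1) 0 (by simp) (by simp) (by simp)]
    rw [abs_of_nonpos (by linarith)]
    nlinarith
  · have hflux : m ≤ primitive a t := by
      linarith [mono ht', growth 0 1 (by simp) (by simp) (by simp)]
    rw [abs_of_nonneg (by linarith)]
    nlinarith

end Primitive

section BracketMul

variable {s : ℝ}

lemma one_add_sq_pos (t : ℝ) : 0 < 1 + t ^ 2 := by positivity

lemma one_add_sq_rpow_eq (s t : ℝ) : (1 + t ^ 2) ^ s = (1 + t ^ 2) ^ (s - 1) * (1 + t ^ 2) := by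
  rw [← rpow_add_one (one_add_sq_pos t).ne', sub_add_cancel]

lemma contDiff_one_add_sq_rpow_s14 {n : WithTop ℕ∞} (s : ℝ) :
    ContDiff ℝ n fun t : ℝ => (1 + t ^ 2) ^ s :=
  (contDiff_const.add (contDiff_id.pow 2)).rpow_const_of_ne fun t => (one_add_sq_pos t).ne'

lemma continuous_one_add_sq_rpow_s14 {X : Type*} [TopologicalSpace X] {v : X → ℝ} (hv : Continuous v)
    (s : ℝ) : Continuous fun x => (1 + v x ^ 2) ^ s :=
  (contDiff_one_add_sq_rpow_s14 (n := 0) s).continuous.comp hv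

/-- The function `t ↦ (1 + t²)^s t`; applied to `∂ⱼu` it is the factor `Γⱼ^s ∂ⱼu` of the test
functions. -/
noncomputable def bracketMul (s t : ℝ) : ℝ := (1 + t ^ 2) ^ s * t

lemma contDiff_bracketMul {n : WithTop ℕ∞} (s : ℝ) : ContDiff ℝ n (bracketMul s) :=
  (contDiff_one_add_sq_rpow_s14 s).mul contDiff_id

lemma hasDerivAt_bracketMul (s t : ℝ) :
    HasDerivAt (bracketMul s) ((1 + t ^ 2) ^ (s - 1) * (1 + (1 + 2 * s) * t ^ 2)) t := by
  have hsq : HasDerivAt (fun t : ℝ => 1 + t ^ 2) (2 * t) t := by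
    simpa using (hasDerivAt_pow 2 t).const_add 1
  have hmul := (hsq.rpow_const (p := s) (Or.inl (one_add_sq_pos t).ne')).mul (hasDerivAt_id t)
  refine hmul.congr_deriv ?_
  rw [id, one_add_sq_rpow_eq s]
  ring

lemma le_deriv_bracketMul {κ : ℝ} (hκ₁ : κ ≤ 1) (hκs : κ ≤ 1 + 2 * s) (t : ℝ) :
    κ * (1 + t ^ 2) ^ s ≤ deriv (bracketMul s) t := by
  have hκ : κ * (1 + t ^ 2) ≤ 1 + (1 + 2 * s) * t ^ 2 := by nlinarith [sq_nonneg t]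
  rw [(hasDerivAt_bracketMul s t).deriv, one_add_sq_rpow_eq, mul_left_comm]
  gcongr

lemma abs_deriv_bracketMul_le (s t : ℝ) :
    |deriv (bracketMul s) t| ≤ (1 + 2 * |s|) * (1 + t ^ 2) ^ s := by
  have hpoly : |1 + (1 + 2 * s) * t ^ 2| ≤ (1 + 2 * |s|) * (1 + t ^ 2) := by
    calc |1 + (1 + 2 * s) * t ^ 2| = |1 + t ^ 2 + 2 * s * t ^ 2| := by ring_nf
      _ ≤ |1 + t ^ 2| + |2 * s * t ^ 2| := abs_add_le _ _
      _ = 1 + t ^ 2 + 2 * |s| * t ^ 2 := by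
        rw [abs_of_pos (one_add_sq_pos t), abs_mul, abs_mul, abs_two, abs_sq]
      _ ≤ (1 + 2 * |s|) * (1 + t ^ 2) := by nlinarith [abs_nonneg s]
  rw [(hasDerivAt_bracketMul s t).deriv, one_add_sq_rpow_eq s, abs_mul, mul_left_comm,
    abs_of_nonneg (by positivity)]
  gcongr

lemma sq_bracketMul_le (s t : ℝ) : bracketMul s t ^ 2 ≤ (1 + t ^ 2) ^ (2 * s + 1) := by
  have hpos := one_add_sq_pos t
  calc bracketMul s t ^ 2 = (1 + t ^ 2) ^ (2 * s) * t ^ 2 := by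
        rw [bracketMul, mul_pow, ← rpow_mul_natCast hpos.le, mul_comm s, Nat.cast_ofNat]
    _ ≤ (1 + t ^ 2) ^ (2 * s) * (1 + t ^ 2) := by gcongr; linarith
    _ = (1 + t ^ 2) ^ (2 * s + 1) := (rpow_add_one hpos.ne' _).symm

lemma one_add_sq_rpow_succ_le (hs : -1 ≤ s) (t : ℝ) :
    (1 + t ^ 2) ^ (s + 1) ≤ 2 * (t * bracketMul s t) + 2 ^ (s + 1) := by
  have hpos := one_add_sq_pos t
  have hmul : t * bracketMul s t = (1 + t ^ 2) ^ s * t ^ 2 := by rw [bracketMul]; ring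
  rw [hmul]
  rcases le_total 1 (t ^ 2) with ht | ht
  · calc (1 + t ^ 2) ^ (s + 1) = (1 + t ^ 2) ^ s * (1 + t ^ 2) := rpow_add_one hpos.ne' s
      _ ≤ (1 + t ^ 2) ^ s * (2 * t ^ 2) := by gcongr; linarith
      _ = 2 * ((1 + t ^ 2) ^ s * t ^ 2) := by ring
      _ ≤ 2 * ((1 + t ^ 2) ^ s * t ^ 2) + 2 ^ (s + 1) := le_add_of_nonneg_right (by positivity)
  · calc (1 + t ^ 2) ^ (s + 1) ≤ 2 ^ (s + 1) :=
        rpow_le_rpow hpos.le (by linarith) (by linarith)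
      _ ≤ 2 * ((1 + t ^ 2) ^ s * t ^ 2) + 2 ^ (s + 1) := le_add_of_nonneg_left (by positivity)

end BracketMul

section TestFunction

variable {η v : ℝ² → ℝ} {n : ℕ} {s : ℝ}

/-- The test function `η^{2(n+1)} (1 + v²)^s v`, used with `v = ∂ⱼu`. -/
noncomputable def bracketTest (η v : ℝ² → ℝ) (n : ℕ) (s : ℝ) (x : ℝ²) : ℝ :=
  η x ^ (2 * (n + 1)) * bracketMul s (v x)

lemma contDiff_bracketTest {k : WithTop ℕ∞} (hη : ContDiff ℝ k η) (hv : ContDiff ℝ k v) :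
    ContDiff ℝ k (bracketTest η v n s) :=
  (hη.pow _).mul ((contDiff_bracketMul s).comp hv)

lemma tsupport_bracketTest_subset : tsupport (bracketTest η v n s) ⊆ tsupport η :=
  closure_mono fun x hx hηx => hx (by simp [bracketTest, hηx])

lemma hasCompactSupport_bracketTest (hη : HasCompactSupport η) :
    HasCompactSupport (bracketTest η v n s) :=
  hη.of_isClosed_subset (isClosed_tsupport _) tsupport_bracketTest_subset

lemma pd_bracketTest (i : Fin 2) {x : ℝ²} (hη : DifferentiableAt ℝ η x)
    (hv : DifferentiableAt ℝ v x) :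
    pd i (bracketTest η v n s) x = η x ^ (2 * n) *
      (η x ^ 2 * (deriv (bracketMul s) (v x) * pd i v x) +
        2 * (n + 1) * (η x * pd i η x * bracketMul s (v x))) := by
  have hb : DifferentiableAt ℝ (bracketMul s) (v x) :=
    (hasDerivAt_bracketMul s _).differentiableAt
  change pd i (fun y => η y ^ (2 * (n + 1)) * bracketMul s (v y)) x = _
  rw [pd_mul (v := fun y => η y ^ (2 * (n + 1))) (w := fun y => bracketMul s (v y)) i (hη.pow _)
    (hb.comp x hv), pd_comp i hv hb.hasDerivAt, pd_pow i _ hη,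
    show 2 * (n + 1) - 1 = 2 * n + 1 by lia]
  push_cast
  ring

end TestFunction

section EulerEquation

variable {Ω : Set ℝ²} {a : Fin 2 → ℝ → ℝ} {u φ : ℝ² → ℝ}

/-- `u` solves, in nondivergence form on `Ω`, the Euler equation `∑ᵢ ∂ᵢ[fᵢ'(∂ᵢu)] = 0` of a
splitting energy with coefficients `a i = fᵢ''`. -/
def SolvesSplittingEquation (a : Fin 2 → ℝ → ℝ) (Ω : Set ℝ²) (u : ℝ² → ℝ) : Prop :=
  ∀ x ∈ Ω, ∑ i, a i (pd i u x) * pd i (pd i u) x = 0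

lemma contDiff_primitive_pd {a : ℝ → ℝ} (ha : Continuous a) (hu : ContDiff ℝ 2 u) (i : Fin 2) :
    ContDiff ℝ 1 fun x => primitive a (pd i u x) :=
  (contDiff_primitive ha).comp (contDiff_pd i hu one_add_one_eq_two.le)

lemma pd_primitive_pd {a : ℝ → ℝ} (ha : Continuous a) (hu : ContDiff ℝ 2 u) (i j : Fin 2) (x : ℝ²) :
    pd j (fun y => primitive a (pd i u y)) x = a (pd i u x) * pd j (pd i u) x :=
  pd_comp j ((contDiff_pd i hu one_add_one_eq_two.le).differentiable one_ne_zero x)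
    (hasDerivAt_primitive ha _)

lemma sum_integral_primitive_mul_pd_eq_zero (ha : ∀ i, Continuous (a i)) (hu : ContDiff ℝ 2 u)
    (hau : SolvesSplittingEquation a Ω u) (hφ : ContDiff ℝ 1 φ) (hφc : HasCompactSupport φ)
    (hφΩ : tsupport φ ⊆ Ω) : ∑ i, ∫ x, primitive (a i) (pd i u x) * pd i φ x = 0 := by
  have hflux (i : Fin 2) := contDiff_primitive_pd (ha i) hu i
  have hint (i : Fin 2) :
      Integrable fun x => pd i (fun y => primitive (a i) (pd i u y)) x * φ x :=
    ((continuous_pd i (hflux i)).mul hφ.continuous).integrable_of_hasCompactSupport hφc.mul_left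
  calc ∑ i, ∫ x, primitive (a i) (pd i u x) * pd i φ x
      = -∫ x, ∑ i, pd i (fun y => primitive (a i) (pd i u y)) x * φ x := by
        rw [integral_finsetSum _ fun i _ => hint i, ← Finset.sum_neg_distrib]
        exact Finset.sum_congr rfl fun i _ => integral_mul_pd i (hflux i) hφ hφc
    _ = 0 := by
        refine neg_eq_zero.2 (integral_eq_zero_of_ae (.of_forall fun x => ?_))
        by_cases hx : x ∈ tsupport φ
        · simp_rw [pd_primitive_pd (ha _) hu, ← Finset.sum_mul, hau x (hφΩ hx), zero_mul,
            Pi.zero_apply]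
        · simp [image_eq_zero_of_notMem_tsupport hx]

lemma sum_integral_linearized_eq_zero (ha : ∀ i, Continuous (a i)) (hu : ContDiff ℝ 2 u)
    (hau : SolvesSplittingEquation a Ω u) (hφ : ContDiff ℝ 2 φ) (hφc : HasCompactSupport φ)
    (hφΩ : tsupport φ ⊆ Ω) (j : Fin 2) :
    ∑ i, ∫ x, a i (pd i u x) * pd i (pd j u) x * pd i φ x = 0 := by
  have hpd (i : Fin 2) : ContDiff ℝ 1 (pd i φ) := contDiff_pd i hφ one_add_one_eq_two.le
  have hparts (i : Fin 2) : ∫ x, a i (pd i u x) * pd i (pd j u) x * pd i φ x =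
      -∫ x, primitive (a i) (pd i u x) * pd i (pd j φ) x := by
    simp_rw [pd_comm hφ i j, integral_mul_pd j (contDiff_primitive_pd (ha i) hu i) (hpd i)
      (hasCompactSupport_pd i hφc), pd_primitive_pd (ha i) hu, pd_comm hu i j, neg_neg]
  simp_rw [hparts, Finset.sum_neg_distrib, neg_eq_zero]
  exact sum_integral_primitive_mul_pd_eq_zero ha hu hau (hpd j) (hasCompactSupport_pd j hφc)
    ((tsupport_pd_subset j).trans hφΩ)

end EulerEquation

section Caccioppoli

variable {Ω : Set ℝ²} {a : Fin 2 → ℝ → ℝ} {u η : ℝ² → ℝ} {α κ : ℝ}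

lemma caccioppoli_pointwise_s14 {P Q H h e p q N : ℝ} (hP : 0 ≤ P) (hQ : 0 ≤ Q) (hκ : 0 < κ)
    (hH : κ * P ≤ H) (hh : h ^ 2 ≤ P * Q) :
    κ / 2 * (e ^ 2 * (P * p ^ 2)) - 2 * N ^ 2 / κ * (Q * q ^ 2) ≤
      p * (e ^ 2 * (H * p) + 2 * N * (e * q * h)) := by
  have young : 2 * -(2 * N * (e * q * h) * p) ≤
      κ * (e ^ 2 * (P * p ^ 2)) + 4 * N ^ 2 / κ * (Q * q ^ 2) := by
    refine two_mul_le_add_of_sq_le_mul (by positivity) (by positivity) ?_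
    calc (-(2 * N * (e * q * h) * p)) ^ 2 = 4 * N ^ 2 * e ^ 2 * q ^ 2 * p ^ 2 * h ^ 2 := by ring
      _ ≤ 4 * N ^ 2 * e ^ 2 * q ^ 2 * p ^ 2 * (P * Q) := by gcongr
      _ = κ * (e ^ 2 * (P * p ^ 2)) * (4 * N ^ 2 / κ * (Q * q ^ 2)) := by field_simp
  have coercive : e ^ 2 * p ^ 2 * (κ * P) ≤ e ^ 2 * p ^ 2 * H := by gcongr
  linear_combination coercive + young / 2

lemma caccioppoli_directional {a v : ℝ² → ℝ} (ha : Continuous a) (ha0 : ∀ x, 0 ≤ a x)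
    (hv : ContDiff ℝ 1 v) (hη : ContDiff ℝ 1 η) (hηc : HasCompactSupport η) (hκ : 0 < κ)
    (hκ₁ : κ ≤ 1) (hκα : κ ≤ 1 + 2 * α) (n : ℕ) (i : Fin 2) :
    κ / 2 * (∫ x, η x ^ (2 * (n + 1)) * (1 + v x ^ 2) ^ α * (a x * pd i v x ^ 2)) -
      2 * (n + 1) ^ 2 / κ *
        (∫ x, η x ^ (2 * n) * (1 + v x ^ 2) ^ (α + 1) * (a x * pd i η x ^ 2)) ≤
      ∫ x, a x * pd i v x * pd i (bracketTest η v n α) x := by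
  have hpv := continuous_pd i hv
  have hpη := continuous_pd i hη
  have hpφ := continuous_pd i (contDiff_bracketTest (n := n) (s := α) hη hv)
  have hΓ := continuous_one_add_sq_rpow_s14 hv.continuous
  have hint₁ : Integrable fun x =>
      η x ^ (2 * (n + 1)) * (1 + v x ^ 2) ^ α * (a x * pd i v x ^ 2) :=
    integrable_of_eq_zero_off_tsupport hηc (by have := hΓ α; fun_prop) fun x hx => by
      simp [image_eq_zero_of_notMem_tsupport hx]
  have hint₂ : Integrable fun x =>
      η x ^ (2 * n) * (1 + v x ^ 2) ^ (α + 1) * (a x * pd i η x ^ 2) :=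
    integrable_of_eq_zero_off_tsupport hηc (by have := hΓ (α + 1); fun_prop) fun x hx => by
      simp [pd_eq_zero_of_notMem_tsupport i hx]
  rw [← integral_const_mul, ← integral_const_mul, ← integral_sub (by fun_prop) (by fun_prop)]
  refine integral_mono (by fun_prop) (((ha.mul hpv).mul hpφ).integrable_of_hasCompactSupport
    (hasCompactSupport_pd i (hasCompactSupport_bracketTest hηc)).mul_left) fun x => ?_
  have hh : bracketMul α (v x) ^ 2 ≤ (1 + v x ^ 2) ^ α * (1 + v x ^ 2) ^ (α + 1) := by
    rw [← rpow_add (one_add_sq_pos _), ← add_assoc, ← two_mul]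
    exact sq_bracketMul_le α (v x)
  have hweight : 0 ≤ η x ^ (2 * n) * a x := mul_nonneg ((even_two_mul n).pow_nonneg _) (ha0 x)
  have hpt := mul_le_mul_of_nonneg_left (caccioppoli_pointwise_s14 (e := η x) (p := pd i v x)
    (q := pd i η x) (N := n + 1) (by positivity) (by positivity) hκ
    (le_deriv_bracketMul hκ₁ hκα (v x)) hh) hweight
  simp only [pd_bracketTest i (hη.differentiable one_ne_zero x) (hv.differentiable one_ne_zero x)]
  linear_combination hpt

lemma caccioppoli (ha : ∀ i, Continuous (a i)) (ha0 : ∀ i t, 0 ≤ a i t) (hu : ContDiff ℝ 3 u)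
    (hau : SolvesSplittingEquation a Ω u) (hη : ContDiff ℝ 2 η) (hηc : HasCompactSupport η)
    (hηΩ : tsupport η ⊆ Ω) (hκ : 0 < κ) (hκ₁ : κ ≤ 1) (hκα : κ ≤ 1 + 2 * α) (n : ℕ) (j : Fin 2) :
    ∑ i, ∫ x, η x ^ (2 * (n + 1)) * (1 + pd j u x ^ 2) ^ α *
        (a i (pd i u x) * pd i (pd j u) x ^ 2) ≤
      (2 * (n + 1) / κ) ^ 2 * ∑ i, ∫ x, η x ^ (2 * n) * (1 + pd j u x ^ 2) ^ (α + 1) *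
        (a i (pd i u x) * pd i η x ^ 2) := by
  have hu₂ : ContDiff ℝ 2 u := hu.of_le (by norm_num)
  have hpd (i : Fin 2) : ContDiff ℝ 2 (pd i u) := contDiff_pd i hu (by norm_num)
  have hdir (i : Fin 2) := caccioppoli_directional (a := fun x => a i (pd i u x))
    ((ha i).comp (hpd i).continuous) (fun x => ha0 i _) ((hpd j).of_le one_le_two)
    (hη.of_le one_le_two) hηc hκ hκ₁ hκα n i
  have hsum := (Finset.sum_le_sum fun i (_ : i ∈ Finset.univ) => hdir i).trans_eq
    (sum_integral_linearized_eq_zero ha hu₂ hau (contDiff_bracketTest hη (hpd j))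
      (hasCompactSupport_bracketTest hηc) (tsupport_bracketTest_subset.trans hηΩ) j)
  rw [Finset.sum_sub_distrib, ← Finset.mul_sum, ← Finset.mul_sum, sub_nonpos] at hsum
  refine le_of_mul_le_mul_left (hsum.trans_eq ?_) (half_pos hκ)
  field_simp

end Caccioppoli

section Energy

variable {Ω : Set ℝ²} {a : Fin 2 → ℝ → ℝ} {u ψ : ℝ² → ℝ} {C m M : ℝ}

lemma exists_cutoff {E : Type*} [NormedAddCommGroup E] [NormedSpace ℝ E] [FiniteDimensional ℝ E]
    {K Ω : Set E} (hK : IsCompact K) (hΩ : IsOpen Ω) (hKΩ : K ⊆ Ω) :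
    ∃ ψ : E → ℝ, ContDiff ℝ 1 ψ ∧ HasCompactSupport ψ ∧ tsupport ψ ⊆ Ω ∧
      (∀ x, ψ x ∈ Set.Icc 0 1) ∧ ∀ x ∈ K, ψ x = 1 := by
  obtain ⟨L, hL, hKL, hLΩ⟩ := exists_compact_between hK hΩ hKΩ
  obtain ⟨ψ, hψ₁, hψ₀, hψ⟩ := exists_contMDiffMap_one_nhds_of_subset_interior (n := 1)
    (modelWithCornersSelf ℝ E) hK.isClosed hKL
  have hψL : tsupport ψ ⊆ L := closure_minimal
    (fun x hx => by_contra fun hxL => hx (hψ₀ x hxL)) hL.isClosed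
  exact ⟨ψ, ψ.contMDiff.contDiff, HasCompactSupport.intro hL hψ₀, hψL.trans hLΩ, hψ,
    fun x hx => hψ₁.self_of_nhdsSet x hx⟩

lemma pd_mul_pow_three (i : Fin 2) {x : ℝ²} (hu : DifferentiableAt ℝ u x)
    (hψ : DifferentiableAt ℝ ψ x) :
    pd i (fun y => u y * ψ y ^ 3) x =
      ψ x ^ 3 * pd i u x + ψ x ^ 2 * (3 * (u x * pd i ψ x)) := by
  rw [pd_mul (w := fun y => ψ y ^ 3) i hu (hψ.pow 3), pd_pow i 3 hψ]
  push_cast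
  ring

/-- The error left in the energy estimate when `z = 3u∂ᵢψ` is at most `k` in modulus: it bounds
`ψ² k |g|`, for a flux `g` of at most quadratic growth, where `ψ |∂ᵢu| ≤ 2k`. -/
def energyError (C k : ℝ) : ℝ := k * C * ((1 + 2 * k) * (2 * k))

lemma energy_pointwise {g t r k z : ℝ} (hgt : g * t = |g| * |t|)
    (hg : |g| ≤ C * (1 + |t|) * |t|) (hC : 0 ≤ C) (hr₀ : 0 ≤ r) (hr₁ : r ≤ 1) (hz : |z| ≤ k) :
    1 / 2 * (r ^ 3 * (g * t)) - energyError C k ≤ g * (r ^ 3 * t + r ^ 2 * z) := by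
  have hk : 0 ≤ k := (abs_nonneg z).trans hz
  have perturbation : -(k * |g|) ≤ g * z := by
    refine neg_le_of_abs_le ?_
    rw [abs_mul, mul_comm]
    gcongr
  have absorb : r ^ 2 * (k * |g|) ≤ 1 / 2 * (r ^ 3 * (|g| * |t|)) + energyError C k := by
    rcases le_total (2 * k) (r * |t|) with large | small
    · calc r ^ 2 * (k * |g|) = 1 / 2 * (r ^ 2 * |g| * (2 * k)) := by ring
        _ ≤ 1 / 2 * (r ^ 2 * |g| * (r * |t|)) := by gcongr
        _ = 1 / 2 * (r ^ 3 * (|g| * |t|)) := by ring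
        _ ≤ _ := le_add_of_nonneg_right (by unfold energyError; positivity)
    · calc r ^ 2 * (k * |g|) ≤ r ^ 2 * (k * (C * (1 + |t|) * |t|)) := by gcongr
        _ = k * C * ((r + r * |t|) * (r * |t|)) := by ring
        _ ≤ energyError C k := by unfold energyError; gcongr
        _ ≤ _ := le_add_of_nonneg_left (by positivity)
  have := mul_le_mul_of_nonneg_left perturbation (sq_nonneg r)
  rw [hgt]
  linear_combination absorb + this - r ^ 3 * hgt

lemma tsupport_mul_pow_three_subset : tsupport (fun x => u x * ψ x ^ 3) ⊆ tsupport ψ :=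
  closure_mono fun _ hx hψx => hx (by simp only [hψx]; ring)

lemma hasCompactSupport_mul_pow_three (hψ : HasCompactSupport ψ) :
    HasCompactSupport fun x => u x * ψ x ^ 3 :=
  hψ.of_isClosed_subset (isClosed_tsupport _) tsupport_mul_pow_three_subset

lemma integral_primitive_mul_pd_le {b : ℝ → ℝ} (hb : Continuous b) (hb0 : ∀ t, 0 ≤ b t)
    (hC : 0 ≤ C) (hbC : ∀ t, b t ≤ C * (1 + |t|)) (hu : ContDiff ℝ 2 u) (hψ : ContDiff ℝ 1 ψ)
    (hψc : HasCompactSupport ψ) (hψ₀₁ : ∀ x, ψ x ∈ Set.Icc 0 1) (huM : ∀ x ∈ tsupport ψ, |u x| ≤ M)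
    (i : Fin 2) :
    1 / 2 * (∫ x, ψ x ^ 3 * (primitive b (pd i u x) * pd i u x)) -
        (∫ x, energyError C (3 * (M * |pd i ψ x|))) ≤
      ∫ x, primitive b (pd i u x) * pd i (fun y => u y * ψ y ^ 3) x := by
  have hψcont := hψ.continuous
  have hpψ := continuous_pd i hψ
  have hpu := continuous_pd i (hu.of_le one_le_two)
  have hflux := (contDiff_primitive_pd hb hu i).continuous
  have hpφ := continuous_pd i ((hu.of_le one_le_two).mul (hψ.pow 3))
  have hint₁ : Integrable fun x => ψ x ^ 3 * (primitive b (pd i u x) * pd i u x) :=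
    integrable_of_eq_zero_off_tsupport hψc (by fun_prop) fun x hx => by
      simp [image_eq_zero_of_notMem_tsupport hx]
  have hint₂ : Integrable fun x => energyError C (3 * (M * |pd i ψ x|)) :=
    integrable_of_eq_zero_off_tsupport hψc (by unfold energyError; fun_prop) fun x hx => by
      simp [energyError, pd_eq_zero_of_notMem_tsupport i hx]
  rw [← integral_const_mul, ← integral_sub (by fun_prop) hint₂]
  refine integral_mono (by fun_prop) ((hflux.mul hpφ).integrable_of_hasCompactSupport
    (hasCompactSupport_pd i (hasCompactSupport_mul_pow_three hψc)).mul_left) fun x => ?_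
  simp only [pd_mul_pow_three i (hu.differentiable two_ne_zero x)
    (hψ.differentiable one_ne_zero x)]
  refine energy_pointwise (primitive_mul_self hb hb0 _) (abs_primitive_le hb0 hbC hC _) hC
    (hψ₀₁ x).1 (hψ₀₁ x).2 ?_
  by_cases hx : x ∈ tsupport ψ
  · rw [abs_mul, abs_mul, abs_of_pos three_pos]
    gcongr
    exact huM x hx
  · simp [pd_eq_zero_of_notMem_tsupport i hx]

lemma sum_integral_primitive_mul_pd_le (ha : ∀ i, Continuous (a i)) (ha0 : ∀ i t, 0 ≤ a i t)
    (hC : 0 ≤ C) (haC : ∀ i t, a i t ≤ C * (1 + |t|)) (hu : ContDiff ℝ 2 u)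
    (huM : ∀ x ∈ Ω, |u x| ≤ M) (hau : SolvesSplittingEquation a Ω u) (hψ : ContDiff ℝ 1 ψ)
    (hψc : HasCompactSupport ψ) (hψΩ : tsupport ψ ⊆ Ω) (hψ₀₁ : ∀ x, ψ x ∈ Set.Icc 0 1) :
    ∑ i, ∫ x, ψ x ^ 3 * (primitive (a i) (pd i u x) * pd i u x) ≤
      2 * ∑ i, ∫ x, energyError C (3 * (M * |pd i ψ x|)) := by
  have hweak := sum_integral_primitive_mul_pd_eq_zero ha hu hau
    ((hu.of_le one_le_two).mul (hψ.pow 3)) (hasCompactSupport_mul_pow_three hψc)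
    (tsupport_mul_pow_three_subset.trans hψΩ)
  have hdir (i : Fin 2) := integral_primitive_mul_pd_le (ha i) (ha0 i) hC (haC i) hu hψ hψc hψ₀₁
    (fun x hx => huM x (hψΩ hx)) i
  have hsum := (Finset.sum_le_sum fun i (_ : i ∈ Finset.univ) => hdir i).trans_eq hweak
  rw [Finset.sum_sub_distrib, ← Finset.mul_sum] at hsum
  linarith

lemma integral_abs_pd_le (ha : ∀ i, Continuous (a i)) (ha0 : ∀ i t, 0 ≤ a i t)
    (hC : 0 ≤ C) (haC : ∀ i t, a i t ≤ C * (1 + |t|)) {j : Fin 2} (hm : 0 < m)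
    (ham : ∀ t, |t| ≤ 1 → m ≤ a j t) (hu : ContDiff ℝ 2 u) (huM : ∀ x ∈ Ω, |u x| ≤ M)
    (hau : SolvesSplittingEquation a Ω u) (hψ : ContDiff ℝ 1 ψ) (hψc : HasCompactSupport ψ)
    (hψΩ : tsupport ψ ⊆ Ω) (hψ₀₁ : ∀ x, ψ x ∈ Set.Icc 0 1) :
    ∫ x, ψ x ^ 3 * |pd j u x| ≤
      2 / m * (∑ i, ∫ x, energyError C (3 * (M * |pd i ψ x|))) + ∫ x, ψ x ^ 3 := by
  have hψ3 (x : ℝ²) : 0 ≤ ψ x ^ 3 := pow_nonneg (hψ₀₁ x).1 3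
  have hψcont := hψ.continuous
  have hpu := continuous_pd j (hu.of_le one_le_two)
  have hflux := (contDiff_primitive_pd (ha j) hu j).continuous
  have hint₁ : Integrable fun x => ψ x ^ 3 * (primitive (a j) (pd j u x) * pd j u x) :=
    integrable_of_eq_zero_off_tsupport hψc (by fun_prop) fun x hx => by
      simp [image_eq_zero_of_notMem_tsupport hx]
  have hint₂ : Integrable fun x => ψ x ^ 3 * |pd j u x| :=
    integrable_of_eq_zero_off_tsupport hψc (by fun_prop) fun x hx => by
      simp [image_eq_zero_of_notMem_tsupport hx]
  have hint₃ : Integrable fun x => ψ x ^ 3 :=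
    integrable_of_eq_zero_off_tsupport hψc (by fun_prop) fun x hx => by
      simp [image_eq_zero_of_notMem_tsupport hx]
  have hlower : m * ((∫ x, ψ x ^ 3 * |pd j u x|) - ∫ x, ψ x ^ 3) ≤
      ∫ x, ψ x ^ 3 * (primitive (a j) (pd j u x) * pd j u x) := by
    rw [← integral_sub hint₂ hint₃, ← integral_const_mul]
    refine integral_mono (by fun_prop) hint₁ fun x => ?_
    linear_combination mul_le_mul_of_nonneg_left
      (mul_abs_sub_one_le_primitive_mul_self (ha j) (ha0 j) hm.le ham (pd j u x)) (hψ3 x)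
  have hsingle : ∫ x, ψ x ^ 3 * (primitive (a j) (pd j u x) * pd j u x) ≤
      ∑ i, ∫ x, ψ x ^ 3 * (primitive (a i) (pd i u x) * pd i u x) :=
    Finset.single_le_sum (f := fun i => ∫ x, ψ x ^ 3 * (primitive (a i) (pd i u x) * pd i u x))
      (fun i _ => integral_nonneg fun x => mul_nonneg (hψ3 x) <| by
        rw [primitive_mul_self (ha i) (ha0 i)]
        positivity) (Finset.mem_univ j)
  have henergy := hlower.trans <| hsingle.trans <|
    sum_integral_primitive_mul_pd_le ha ha0 hC haC hu huM hau hψ hψc hψΩ hψ₀₁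
  rw [← le_div_iff₀' hm] at henergy
  linear_combination henergy

end Energy

section EnergyBound

variable {Ω : Set ℝ²} {g : ℝ² → ℝ}

lemma exists_integral_mul_one_add_abs_pd_le {C m : ℝ} (hC : 0 ≤ C) (hm : 0 < m) (M : ℝ)
    (hΩ : IsOpen Ω) (hg : Continuous g) (hgc : HasCompactSupport g) (hgΩ : tsupport g ⊆ Ω)
    (j : Fin 2) :
    ∃ W, 0 ≤ W ∧ ∀ a : Fin 2 → ℝ → ℝ, (∀ i, Continuous (a i)) → (∀ i t, 0 ≤ a i t) →
      (∀ i t, a i t ≤ C * (1 + |t|)) → (∀ t, |t| ≤ 1 → m ≤ a j t) →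
      ∀ u : ℝ² → ℝ, ContDiff ℝ 2 u → (∀ x ∈ Ω, |u x| ≤ M) → SolvesSplittingEquation a Ω u →
        ∫ x, g x * (1 + |pd j u x|) ≤ W := by
  obtain ⟨ψ, hψ, hψc, hψΩ, hψ₀₁, hψ₁⟩ := exists_cutoff hgc hΩ hgΩ
  obtain ⟨B, hB⟩ := hgc.exists_bound_of_continuous hg
  have hB₀ : 0 ≤ B := (norm_nonneg _).trans (hB 0)
  have hgψ (x : ℝ²) : g x ≤ B * ψ x ^ 3 := by
    by_cases hx : x ∈ tsupport g
    · simpa [hψ₁ x hx] using (le_abs_self _).trans (hB x)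
    · rw [image_eq_zero_of_notMem_tsupport hx]
      exact mul_nonneg hB₀ (pow_nonneg (hψ₀₁ x).1 3)
  let V := B * (2 / m * (∑ i, ∫ x, energyError C (3 * (M * |pd i ψ x|))) + 2 * ∫ x, ψ x ^ 3)
  refine ⟨|V|, abs_nonneg V, fun a ha ha0 haC ham u hu huM hau => le_trans ?_ (le_abs_self V)⟩
  have hψcont := hψ.continuous
  have hpu := continuous_pd j (hu.of_le one_le_two)
  have hint₁ : Integrable fun x => ψ x ^ 3 := integrable_of_eq_zero_off_tsupport hψc
    (by fun_prop) fun x hx => by simp [image_eq_zero_of_notMem_tsupport hx]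
  have hint₂ : Integrable fun x => ψ x ^ 3 * |pd j u x| := integrable_of_eq_zero_off_tsupport hψc
    (by fun_prop) fun x hx => by simp [image_eq_zero_of_notMem_tsupport hx]
  have hint₃ : Integrable fun x => g x * (1 + |pd j u x|) := integrable_of_eq_zero_off_tsupport hgc
    (by fun_prop) fun x hx => by simp [image_eq_zero_of_notMem_tsupport hx]
  calc ∫ x, g x * (1 + |pd j u x|)
      ≤ ∫ x, B * (ψ x ^ 3 * |pd j u x| + ψ x ^ 3) := by
        refine integral_mono hint₃ (by fun_prop) fun x => ?_
        linear_combination mul_le_mul_of_nonneg_right (hgψ x)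
          (add_nonneg zero_le_one (abs_nonneg (pd j u x)))
    _ = B * ((∫ x, ψ x ^ 3 * |pd j u x|) + ∫ x, ψ x ^ 3) := by
        rw [integral_const_mul, integral_add hint₂ hint₁]
    _ ≤ V := by
        refine mul_le_mul_of_nonneg_left ?_ hB₀
        linear_combination integral_abs_pd_le ha ha0 hC haC hm ham hu huM hau hψ hψc hψΩ hψ₀₁

end EnergyBound

section Coefficients

/-- The structural conditions on the second derivatives `a 0 = f₁''` and `a 1 = f₂''` of a
splitting energy: the exponent `μ` limits the degeneration of `a 0`, the exponent `γ` the growth of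
`a 1`. The lower bound `m` is uniform for `a 1` on `[-1, 1]`. -/
structure IsSplittingCoeff (c C m μ γ : ℝ) (a : Fin 2 → ℝ → ℝ) : Prop where
  continuous (i : Fin 2) : Continuous (a i)
  lower_zero (t : ℝ) : c * (1 + t ^ 2) ^ (-(μ / 2)) ≤ a 0 t
  upper_zero (t : ℝ) : a 0 t ≤ C
  nonneg_one (t : ℝ) : 0 ≤ a 1 t
  lower_one (t : ℝ) (ht : |t| ≤ 1) : m ≤ a 1 t
  upper_one (t : ℝ) : a 1 t ≤ C * (1 + |t|) ^ γ

namespace IsSplittingCoeff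

variable {c C m μ γ : ℝ} {a : Fin 2 → ℝ → ℝ}

lemma nonneg (h : IsSplittingCoeff c C m μ γ a) (hc : 0 ≤ c) : ∀ i t, 0 ≤ a i t :=
  Fin.forall_fin_two.2
    ⟨fun t => (mul_nonneg hc (by positivity)).trans (h.lower_zero t), h.nonneg_one⟩

lemma le_linear (h : IsSplittingCoeff c C m μ γ a) (hC : 0 ≤ C) (hγ : γ ≤ 1) :
    ∀ i t, a i t ≤ C * (1 + |t|) := by
  refine Fin.forall_fin_two.2 ⟨fun t => (h.upper_zero t).trans ?_, fun t =>
    (h.upper_one t).trans ?_⟩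
  · exact le_mul_of_one_le_right hC (by simp)
  · gcongr
    exact rpow_le_self_of_one_le (by simp) hγ

end IsSplittingCoeff

/-- The coefficients `f₁,δ''` and `f₂,δ''` of the regularised energy. -/
noncomputable def regularizedCoeff (f₁ f₂ : ℝ → ℝ) (γ δ : ℝ) : Fin 2 → ℝ → ℝ :=
  ![fun t => δ + deriv (deriv f₁) t, fun t => δ * (γ + 1) * |t| ^ γ + deriv (deriv f₂) t]

lemma continuous_deriv_deriv {f : ℝ → ℝ} (hf : ContDiff ℝ 2 f) : Continuous (deriv (deriv f)) := by
  simpa [iteratedDeriv_succ] using hf.continuous_iteratedDeriv 2 le_rfl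

lemma isSplittingCoeff_regularizedCoeff {f₁ f₂ : ℝ → ℝ} {c₁ c₂ C₁ C₂ μ₁ μ₂ γ δ : ℝ}
    (hf₁ : ContDiff ℝ 2 f₁) (hf₂ : ContDiff ℝ 2 f₂) (hc₁ : 0 ≤ c₁) (hc₂ : 0 ≤ c₂) (hC₁ : 0 ≤ C₁)
    (hC₂ : 0 ≤ C₂) (hμ₁ : 0 < μ₁) (hμ₂ : 0 ≤ μ₂) (hγ : 0 ≤ γ) (hγ₁ : γ ≤ 1) (hδ : 0 ≤ δ)
    (hδ₁ : δ ≤ 1)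
    (hell₁ : ∀ t, c₁ * (1 + |t|) ^ (-μ₁) ≤ deriv (deriv f₁) t ∧ deriv (deriv f₁) t ≤ C₁)
    (hell₂ : ∀ t, c₂ * (1 + |t|) ^ (-μ₂) ≤ deriv (deriv f₂) t ∧
      deriv (deriv f₂) t ≤ C₂ * (1 + |t|) ^ γ) :
    IsSplittingCoeff (c₁ * 2 ^ (-(μ₁ / 2))) (2 + C₁ + C₂) (c₂ * 2 ^ (-μ₂)) μ₁ γ
      (regularizedCoeff f₁ f₂ γ δ) where
  continuous := by
    have h₁ := continuous_deriv_deriv hf₁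
    have h₂ := continuous_deriv_deriv hf₂
    refine Fin.forall_fin_two.2 ⟨h₁.const_add δ, ?_⟩
    exact ((continuous_abs.rpow_const fun _ => Or.inr hγ).const_mul _).add h₂
  lower_zero t := by
    have bracket : (1 + t ^ 2) ^ (-(μ₁ / 2)) ≤ 2 ^ (μ₁ / 2) * (1 + |t|) ^ (-μ₁) := by
      simpa [neg_div] using rpow_neg_one_add_norm_sq_le t hμ₁
    calc c₁ * 2 ^ (-(μ₁ / 2)) * (1 + t ^ 2) ^ (-(μ₁ / 2))
        ≤ c₁ * 2 ^ (-(μ₁ / 2)) * (2 ^ (μ₁ / 2) * (1 + |t|) ^ (-μ₁)) := by gcongr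
      _ = c₁ * (1 + |t|) ^ (-μ₁) := by
          rw [rpow_neg zero_le_two]
          field_simp
      _ ≤ deriv (deriv f₁) t := (hell₁ t).1
      _ ≤ δ + deriv (deriv f₁) t := le_add_of_nonneg_left hδ
  upper_zero t := by
    change δ + deriv (deriv f₁) t ≤ _
    linarith [(hell₁ t).2]
  nonneg_one t := add_nonneg (by positivity) (le_trans (by positivity) (hell₂ t).1)
  lower_one t ht := by
    calc c₂ * 2 ^ (-μ₂) ≤ c₂ * (1 + |t|) ^ (-μ₂) := by
          refine mul_le_mul_of_nonneg_left ?_ hc₂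
          exact rpow_le_rpow_of_nonpos (by positivity) (by linarith) (by linarith)
      _ ≤ deriv (deriv f₂) t := (hell₂ t).1
      _ ≤ δ * (γ + 1) * |t| ^ γ + deriv (deriv f₂) t := le_add_of_nonneg_left (by positivity)
  upper_one t := by
    calc δ * (γ + 1) * |t| ^ γ + deriv (deriv f₂) t
        ≤ 1 * (1 + 1) * (1 + |t|) ^ γ + C₂ * (1 + |t|) ^ γ := by
          gcongr
          · exact le_add_of_nonneg_left zero_le_one
          · exact (hell₂ t).2
      _ = (2 + C₂) * (1 + |t|) ^ γ := by ring
      _ ≤ (2 + C₁ + C₂) * (1 + |t|) ^ γ := by gcongr; linarith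

end Coefficients

section Moments

variable {Ω : Set ℝ²} {a : Fin 2 → ℝ → ℝ} {u v η : ℝ² → ℝ} {c C m μ γ α : ℝ}

/-- The moment `∫ η^{2k} Γ^p` of `Γ = 1 + v²` on the cut-off region, used with `v = ∂ⱼu`. -/
noncomputable def cutoffMoment (η v : ℝ² → ℝ) (k : ℕ) (p : ℝ) : ℝ :=
  ∫ x, η x ^ (2 * k) * (1 + v x ^ 2) ^ p

/-- The moment `∫ |∇η|² η^{2k} Γ^p` of `Γ = 1 + v²` on the transition region of the cut-off. -/
noncomputable def gradMoment (η v : ℝ² → ℝ) (k : ℕ) (p : ℝ) : ℝ :=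
  ∫ x, (pd 0 η x ^ 2 + pd 1 η x ^ 2) * η x ^ (2 * k) * (1 + v x ^ 2) ^ p

lemma cutoffMoment_nonneg (η v : ℝ² → ℝ) (k : ℕ) (p : ℝ) : 0 ≤ cutoffMoment η v k p :=
  integral_nonneg fun _ => mul_nonneg ((even_two_mul k).pow_nonneg _) (by positivity)

lemma gradMoment_nonneg (η v : ℝ² → ℝ) (k : ℕ) (p : ℝ) : 0 ≤ gradMoment η v k p :=
  integral_nonneg fun _ => mul_nonneg (mul_nonneg (by positivity) ((even_two_mul k).pow_nonneg _))
    (by positivity)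

lemma setIntegral_cutoffMoment (hηΩ : tsupport η ⊆ Ω) {k : ℕ} (hk : k ≠ 0) (p : ℝ) :
    ∫ x in Ω, η x ^ (2 * k) * (1 + v x ^ 2) ^ p = cutoffMoment η v k p :=
  setIntegral_eq_integral_of_forall_compl_eq_zero fun x hx => by
    simp [image_eq_zero_of_notMem_tsupport fun h => hx (hηΩ h), hk]

lemma setIntegral_gradMoment (hηΩ : tsupport η ⊆ Ω) (k : ℕ) (p : ℝ) :
    ∫ x in Ω, (pd 0 η x ^ 2 + pd 1 η x ^ 2) * η x ^ (2 * k) * (1 + v x ^ 2) ^ p =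
      gradMoment η v k p :=
  setIntegral_eq_integral_of_forall_compl_eq_zero fun x hx => by
    simp [pd_eq_zero_of_notMem_tsupport _ fun h => hx (hηΩ h)]

lemma integrable_cutoffMoment (hη : Continuous η) (hηc : HasCompactSupport η) (hv : Continuous v)
    {k : ℕ} (hk : k ≠ 0) (p : ℝ) :
    Integrable fun x => η x ^ (2 * k) * (1 + v x ^ 2) ^ p :=
  have := continuous_one_add_sq_rpow_s14 hv p
  integrable_of_eq_zero_off_tsupport hηc (by fun_prop) fun x hx => by
    simp [image_eq_zero_of_notMem_tsupport hx, hk]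

lemma integrable_gradMoment (hη : ContDiff ℝ 1 η) (hηc : HasCompactSupport η) (hv : Continuous v)
    (k : ℕ) (p : ℝ) :
    Integrable fun x => (pd 0 η x ^ 2 + pd 1 η x ^ 2) * η x ^ (2 * k) * (1 + v x ^ 2) ^ p :=
  have hpη (i : Fin 2) := continuous_pd i hη
  have hηcont := hη.continuous
  have := continuous_one_add_sq_rpow_s14 hv p
  integrable_of_eq_zero_off_tsupport hηc (by fun_prop) fun x hx => by
    simp [pd_eq_zero_of_notMem_tsupport _ hx]

lemma rpow_mul_rpow_le_add {y Γ b : ℝ} (hγ : 0 ≤ γ) (hγ₁ : γ < 1) (hy : 0 ≤ y) (hΓ : 0 ≤ Γ) :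
    y ^ γ * Γ ^ b ≤ y + Γ ^ (b / (1 - γ)) := by
  have hγ' : 0 < 1 - γ := sub_pos.2 hγ₁
  calc y ^ γ * Γ ^ b = y ^ γ * (Γ ^ (b / (1 - γ))) ^ (1 - γ) := by
        rw [← rpow_mul hΓ, div_mul_cancel₀ _ hγ'.ne']
    _ ≤ γ * y + (1 - γ) * Γ ^ (b / (1 - γ)) :=
        geom_mean_le_arith_mean2_weighted hγ hγ'.le hy (by positivity) (by ring)
    _ ≤ y + Γ ^ (b / (1 - γ)) := by
        gcongr
        · exact mul_le_of_le_one_left hy hγ₁.le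
        · exact mul_le_of_le_one_left (by positivity) (sub_le_self 1 hγ)

lemma sum_coeff_mul_sq_le (h : IsSplittingCoeff c C m μ γ a) (hC : 0 ≤ C) (hγ : 0 ≤ γ)
    (hγ₁ : γ < 1) {Γ b : ℝ} (hΓ : 0 ≤ Γ) (t q : Fin 2 → ℝ) :
    ∑ i, Γ ^ b * (a i (t i) * q i ^ 2) ≤
      C * ((q 0 ^ 2 + q 1 ^ 2) * (Γ ^ b + Γ ^ (b / (1 - γ)) + (1 + |t 1|))) := by
  have bound₀ : Γ ^ b * a 0 (t 0) ≤ C * (Γ ^ b + Γ ^ (b / (1 - γ)) + (1 + |t 1|)) := by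
    calc Γ ^ b * a 0 (t 0) ≤ Γ ^ b * C := by gcongr; exact h.upper_zero _
      _ = C * (Γ ^ b + 0 + 0) := by ring
      _ ≤ _ := by gcongr <;> positivity
  have bound₁ : Γ ^ b * a 1 (t 1) ≤ C * (Γ ^ b + Γ ^ (b / (1 - γ)) + (1 + |t 1|)) := by
    calc Γ ^ b * a 1 (t 1) ≤ Γ ^ b * (C * (1 + |t 1|) ^ γ) := by gcongr; exact h.upper_one _
      _ = C * ((1 + |t 1|) ^ γ * Γ ^ b) := by ring
      _ ≤ C * ((1 + |t 1|) + Γ ^ (b / (1 - γ))) := by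
          gcongr
          exact rpow_mul_rpow_le_add hγ hγ₁ (by positivity) hΓ
      _ = C * (0 + Γ ^ (b / (1 - γ)) + (1 + |t 1|)) := by ring
      _ ≤ _ := by gcongr; positivity
  rw [Fin.sum_univ_two]
  linear_combination q 0 ^ 2 * bound₀ + q 1 ^ 2 * bound₁

lemma sum_integral_coeff_mul_pd_sq_le (h : IsSplittingCoeff c C m μ γ a) (hC : 0 ≤ C)
    (hγ : 0 ≤ γ) (hγ₁ : γ < 1) (hu : ContDiff ℝ 1 u) (hv : Continuous v) (hη : ContDiff ℝ 1 η)
    (hηc : HasCompactSupport η) (k : ℕ) (b : ℝ) :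
    ∑ i, ∫ x, η x ^ (2 * k) * (1 + v x ^ 2) ^ b * (a i (pd i u x) * pd i η x ^ 2) ≤
      C * (gradMoment η v k b + gradMoment η v k (b / (1 - γ)) +
        ∫ x, (pd 0 η x ^ 2 + pd 1 η x ^ 2) * η x ^ (2 * k) * (1 + |pd 1 u x|)) := by
  have hpη (i : Fin 2) := continuous_pd i hη
  have hpu (i : Fin 2) := continuous_pd i hu
  have hηcont := hη.continuous
  have ha := h.continuous
  have hint (i : Fin 2) : Integrable fun x =>
      η x ^ (2 * k) * (1 + v x ^ 2) ^ b * (a i (pd i u x) * pd i η x ^ 2) :=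
    integrable_of_eq_zero_off_tsupport hηc (by have := continuous_one_add_sq_rpow_s14 hv b; fun_prop)
      fun x hx => by simp [pd_eq_zero_of_notMem_tsupport i hx]
  have hint₁ := integrable_gradMoment hη hηc hv k b
  have hint₂ := integrable_gradMoment hη hηc hv k (b / (1 - γ))
  have hint₃ : Integrable fun x =>
      (pd 0 η x ^ 2 + pd 1 η x ^ 2) * η x ^ (2 * k) * (1 + |pd 1 u x|) :=
    integrable_of_eq_zero_off_tsupport hηc (by fun_prop) fun x hx => by
      simp [pd_eq_zero_of_notMem_tsupport _ hx]
  rw [← integral_finsetSum _ fun i _ => hint i, gradMoment, gradMoment, ← integral_add hint₁ hint₂,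
    ← integral_add (by fun_prop) hint₃, ← integral_const_mul]
  refine integral_mono (integrable_finsetSum _ fun i _ => hint i)
    (((hint₁.add hint₂).add hint₃).const_mul C) fun x => ?_
  have hpt := mul_le_mul_of_nonneg_left
    (sum_coeff_mul_sq_le h hC hγ hγ₁ (b := b) (one_add_sq_pos (v x)).le
      (fun i => pd i u x) fun i => pd i η x) ((even_two_mul k).pow_nonneg (η x))
  simp only [Fin.sum_univ_two] at hpt ⊢
  linear_combination hpt

lemma exists_caccioppoli_le (hΩ : IsOpen Ω) (hc : 0 ≤ c) (hC : 0 ≤ C) (hm : 0 < m) (hγ : 0 ≤ γ)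
    (hγ₁ : γ < 1) (hα : -(1 / 2) < α) (M : ℝ) (μ : ℝ) (n : ℕ) (hη : ContDiff ℝ 2 η)
    (hηc : HasCompactSupport η) (hηΩ : tsupport η ⊆ Ω) (j : Fin 2) :
    ∃ K, 0 ≤ K ∧ ∀ a, IsSplittingCoeff c C m μ γ a → ∀ u, ContDiff ℝ 3 u →
      (∀ x ∈ Ω, |u x| ≤ M) → SolvesSplittingEquation a Ω u →
      ∑ i, ∫ x, η x ^ (2 * (n + 1)) * (1 + pd j u x ^ 2) ^ α *
          (a i (pd i u x) * pd i (pd j u) x ^ 2) ≤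
        K * (1 + gradMoment η (pd j u) n (α + 1) +
          gradMoment η (pd j u) n ((α + 1) / (1 - γ))) := by
  have hη₁ : ContDiff ℝ 1 η := hη.of_le one_le_two
  let g (x : ℝ²) : ℝ := (pd 0 η x ^ 2 + pd 1 η x ^ 2) * η x ^ (2 * n)
  have hg : Continuous g := by
    have hpη (i : Fin 2) := continuous_pd i hη₁
    have := hη.continuous
    fun_prop
  have hgη : tsupport g ⊆ tsupport η := closure_minimal
    (fun x hx => by_contra fun hxη => hx (by simp [g, pd_eq_zero_of_notMem_tsupport _ hxη]))
    (isClosed_tsupport η)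
  obtain ⟨W, hW, henergy⟩ := exists_integral_mul_one_add_abs_pd_le hC hm M hΩ hg
    (hηc.of_isClosed_subset (isClosed_tsupport g) hgη) (hgη.trans hηΩ) 1
  let κ := min 1 (1 + 2 * α)
  have hκ : 0 < κ := lt_min one_pos (by linarith)
  refine ⟨(2 * (n + 1) / κ) ^ 2 * (C * (1 + W)), by positivity, fun a ha u hu huM hau => ?_⟩
  have hu₁ : ContDiff ℝ 1 u := hu.of_le (by norm_num)
  have hu₂ : ContDiff ℝ 2 u := hu.of_le (by norm_num)
  refine (caccioppoli ha.continuous (ha.nonneg hc) hu hau hη hηc hηΩ hκ (min_le_left _ _)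
    (min_le_right _ _) n j).trans ?_
  rw [mul_assoc, mul_assoc C]
  gcongr
  refine (sum_integral_coeff_mul_pd_sq_le ha hC hγ hγ₁ hu₁ (continuous_pd j hu₁) hη₁ hηc n
    (α + 1)).trans ?_
  gcongr
  have hgrad := add_nonneg (gradMoment_nonneg η (pd j u) n (α + 1))
    (gradMoment_nonneg η (pd j u) n ((α + 1) / (1 - γ)))
  linear_combination henergy a ha.continuous (ha.nonneg hc) (ha.le_linear hC hγ₁.le) ha.lower_one u
    hu₂ huM hau + mul_nonneg hW hgrad

end Moments

section IntegrationByParts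

variable {v η A : ℝ² → ℝ} {c μ s : ℝ}

lemma two_mul_rpow_mul_abs_le {Γ A p : ℝ} (hΓ : 0 < Γ) (hc : 0 < c) (hA : c * Γ ^ (-(μ / 2)) ≤ A)
    (s α : ℝ) :
    2 * (Γ ^ s * |p|) ≤ Γ ^ (2 * s - α + μ / 2) + c⁻¹ * (Γ ^ α * (A * p ^ 2)) := by
  have hA₀ : 0 ≤ A := le_trans (by positivity) hA
  refine two_mul_le_add_of_sq_le_mul (by positivity) (by positivity) ?_
  have hexp : Γ ^ (2 * s - α + μ / 2) * Γ ^ α * Γ ^ (-(μ / 2)) = (Γ ^ s) ^ 2 := by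
    rw [← rpow_add hΓ, ← rpow_add hΓ, ← rpow_mul_natCast hΓ.le]
    congr 1
    push_cast
    ring
  calc (Γ ^ s * |p|) ^ 2
      = Γ ^ (2 * s - α + μ / 2) * Γ ^ α * p ^ 2 * (c⁻¹ * (c * Γ ^ (-(μ / 2)))) := by
        rw [mul_pow, sq_abs, ← hexp]
        field_simp
    _ ≤ Γ ^ (2 * s - α + μ / 2) * Γ ^ α * p ^ 2 * (c⁻¹ * A) := by gcongr
    _ = Γ ^ (2 * s - α + μ / 2) * (c⁻¹ * (Γ ^ α * (A * p ^ 2))) := by ring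

lemma two_mul_abs_mul_bracketMul_le (hμ : 0 ≤ μ) (s α e q t : ℝ) :
    2 * |e * q * bracketMul s t| ≤
      e ^ 2 * (1 + t ^ 2) ^ (2 * s - α + μ / 2) + (1 + t ^ 2) ^ (α + 1) * q ^ 2 := by
  refine two_mul_le_add_of_sq_le_mul (by positivity) (by positivity) ?_
  calc |e * q * bracketMul s t| ^ 2 = e ^ 2 * q ^ 2 * bracketMul s t ^ 2 := by
        rw [sq_abs]
        ring
    _ ≤ e ^ 2 * q ^ 2 * (1 + t ^ 2) ^ (2 * s + 1) := by gcongr; exact sq_bracketMul_le s t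
    _ ≤ e ^ 2 * q ^ 2 * (1 + t ^ 2) ^ ((2 * s - α + μ / 2) + (α + 1)) := by
        refine mul_le_mul_of_nonneg_left ?_ (by positivity)
        exact rpow_le_rpow_of_exponent_le (le_add_of_nonneg_right (sq_nonneg t)) (by linarith)
    _ = e ^ 2 * (1 + t ^ 2) ^ (2 * s - α + μ / 2) * ((1 + t ^ 2) ^ (α + 1) * q ^ 2) := by
        rw [rpow_add (one_add_sq_pos t)]
        ring

lemma abs_pd_bracketTest_le (hc : 0 < c) (hμ : 0 ≤ μ) (s α : ℝ) (n : ℕ) (i : Fin 2) {x : ℝ²}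
    (hη : DifferentiableAt ℝ η x) (hv : DifferentiableAt ℝ v x)
    (hA : c * (1 + v x ^ 2) ^ (-(μ / 2)) ≤ A x) :
    |pd i (bracketTest η v n s) x| ≤
      ((1 + 2 * |s|) / 2 + (n + 1)) *
          (η x ^ (2 * (n + 1)) * (1 + v x ^ 2) ^ (2 * s - α + μ / 2)) +
        (1 + 2 * |s|) / (2 * c) *
          (η x ^ (2 * (n + 1)) * (1 + v x ^ 2) ^ α * (A x * pd i v x ^ 2)) +
        (n + 1) * (η x ^ (2 * n) * (1 + v x ^ 2) ^ (α + 1) * pd i η x ^ 2) := by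
  have hη₀ : 0 ≤ η x ^ (2 * n) := (even_two_mul n).pow_nonneg _
  have hmain : |deriv (bracketMul s) (v x) * pd i v x| ≤
      (1 + 2 * |s|) * ((1 + v x ^ 2) ^ s * |pd i v x|) := by
    rw [abs_mul, ← mul_assoc]
    gcongr
    exact abs_deriv_bracketMul_le s (v x)
  calc |pd i (bracketTest η v n s) x|
      ≤ η x ^ (2 * n) * (η x ^ 2 * |deriv (bracketMul s) (v x) * pd i v x| +
          2 * (n + 1) * |η x * pd i η x * bracketMul s (v x)|) := by
        rw [pd_bracketTest i hη hv, abs_mul, abs_of_nonneg hη₀]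
        gcongr
        refine (abs_add_le _ _).trans_eq ?_
        rw [abs_mul, abs_mul (2 * (n + 1 : ℝ)), abs_sq, abs_of_nonneg (a := 2 * (n + 1 : ℝ))
          (by positivity)]
    _ ≤ _ := by
        linear_combination η x ^ (2 * n) * (η x ^ 2 * hmain +
          η x ^ 2 * (1 + 2 * |s|) / 2 *
            two_mul_rpow_mul_abs_le (p := pd i v x) (one_add_sq_pos (v x)) hc hA s α +
          (n + 1) * two_mul_abs_mul_bracketMul_le hμ s α (η x) (pd i η x) (v x))

lemma integral_abs_pd_bracketTest_le (hc : 0 < c) (hμ : 0 ≤ μ) (s α : ℝ) (n : ℕ)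
    (hη : ContDiff ℝ 1 η) (hηc : HasCompactSupport η) (hv : ContDiff ℝ 1 v) (hA : Continuous A)
    (hcA : ∀ x, c * (1 + v x ^ 2) ^ (-(μ / 2)) ≤ A x) (i : Fin 2) :
    ∫ x, |pd i (bracketTest η v n s) x| ≤
      ((1 + 2 * |s|) / 2 + (n + 1)) * cutoffMoment η v (n + 1) (2 * s - α + μ / 2) +
        (1 + 2 * |s|) / (2 * c) *
          (∫ x, η x ^ (2 * (n + 1)) * (1 + v x ^ 2) ^ α * (A x * pd i v x ^ 2)) +
        (n + 1) * gradMoment η v n (α + 1) := by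
  have hpv := continuous_pd i hv
  have hηcont := hη.continuous
  have hφ : Integrable fun x => |pd i (bracketTest η v n s) x| :=
    ((continuous_pd i (contDiff_bracketTest hη hv)).integrable_of_hasCompactSupport
      (hasCompactSupport_pd i (hasCompactSupport_bracketTest hηc))).abs
  have hint₁ := integrable_cutoffMoment hηcont hηc hv.continuous n.succ_ne_zero
    (2 * s - α + μ / 2)
  have hint₂ : Integrable fun x =>
      η x ^ (2 * (n + 1)) * (1 + v x ^ 2) ^ α * (A x * pd i v x ^ 2) :=
    have := continuous_one_add_sq_rpow_s14 hv.continuous α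
    integrable_of_eq_zero_off_tsupport hηc (by fun_prop) fun x hx => by
      simp [image_eq_zero_of_notMem_tsupport hx]
  have hint₃ := integrable_gradMoment hη hηc hv.continuous n (α + 1)
  rw [cutoffMoment, gradMoment, ← integral_const_mul, ← integral_const_mul, ← integral_const_mul,
    ← integral_add (by fun_prop) (by fun_prop), ← integral_add (by fun_prop) (by fun_prop)]
  refine integral_mono hφ (by fun_prop) fun x => ?_
  have hweight : 0 ≤ η x ^ (2 * n) * (1 + v x ^ 2) ^ (α + 1) :=
    mul_nonneg ((even_two_mul n).pow_nonneg _) (by positivity)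
  have hgrad : pd i η x ^ 2 ≤ pd 0 η x ^ 2 + pd 1 η x ^ 2 := by
    simpa using Finset.single_le_sum (f := fun i => pd i η x ^ 2) (fun _ _ => sq_nonneg _)
      (Finset.mem_univ i)
  have hpt := abs_pd_bracketTest_le hc hμ s α n i (hη.differentiable one_ne_zero x)
    (hv.differentiable one_ne_zero x) (hcA x)
  linear_combination hpt + (n + 1) * (η x ^ (2 * n) * (1 + v x ^ 2) ^ (α + 1)) * hgrad

lemma cutoffMoment_le_integral_mul_bracketTest (hs : -1 ≤ s) (hη : Continuous η)
    (hηc : HasCompactSupport η) (hv : Continuous v) (n : ℕ) :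
    cutoffMoment η v (n + 1) (s + 1) ≤
      2 * (∫ x, v x * bracketTest η v n s x) + 2 ^ (s + 1) * ∫ x, η x ^ (2 * (n + 1)) := by
  have hint₁ : Integrable fun x => v x * bracketTest η v n s x := by
    have hφ : Continuous (bracketTest η v n s) :=
      (contDiff_bracketTest (k := 0) (contDiff_zero.2 hη) (contDiff_zero.2 hv)).continuous
    exact (hv.mul hφ).integrable_of_hasCompactSupport (hasCompactSupport_bracketTest hηc).mul_left
  have hint₂ : Integrable fun x => η x ^ (2 * (n + 1)) :=
    integrable_of_eq_zero_off_tsupport hηc (by fun_prop) fun x hx => by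
      simp [image_eq_zero_of_notMem_tsupport hx]
  rw [cutoffMoment, ← integral_const_mul, ← integral_const_mul,
    ← integral_add (by fun_prop) (by fun_prop)]
  refine integral_mono (integrable_cutoffMoment hη hηc hv n.succ_ne_zero _) (by fun_prop)
    fun x => ?_
  have hweight : 0 ≤ η x ^ (2 * (n + 1)) := (even_two_mul _).pow_nonneg _
  rw [bracketTest]
  linear_combination η x ^ (2 * (n + 1)) * one_add_sq_rpow_succ_le hs (v x)

lemma integral_pd_mul_le {u φ : ℝ² → ℝ} {M : ℝ} (hu : ContDiff ℝ 1 u) (hφ : ContDiff ℝ 1 φ)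
    (hφc : HasCompactSupport φ) (huM : ∀ x ∈ tsupport φ, |u x| ≤ M) (i : Fin 2) :
    ∫ x, pd i u x * φ x ≤ M * ∫ x, |pd i φ x| := by
  rw [← neg_eq_iff_eq_neg.2 (integral_mul_pd i hu hφ hφc), ← integral_neg, ← integral_const_mul]
  have hpφ := continuous_pd i hφ
  have hpφc := hasCompactSupport_pd i hφc
  refine integral_mono
    ((hu.continuous.mul hpφ).integrable_of_hasCompactSupport hpφc.mul_left).neg
    ((hpφ.integrable_of_hasCompactSupport hpφc).abs.const_mul M) fun x => ?_
  by_cases hx : x ∈ tsupport φ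
  · calc -(u x * pd i φ x) ≤ |u x| * |pd i φ x| := (neg_le_abs _).trans_eq (abs_mul _ _)
      _ ≤ M * |pd i φ x| := by gcongr; exact huM x hx
  · simp [pd_eq_zero_of_notMem_tsupport i hx]

lemma cutoffMoment_succ_le_of_abs_le {u : ℝ² → ℝ} {M : ℝ} (hc : 0 < c) (hμ : 0 ≤ μ) (hM : 0 ≤ M)
    (hs : -1 ≤ s) (α : ℝ) (n : ℕ) (hη : ContDiff ℝ 1 η) (hηc : HasCompactSupport η)
    (hu : ContDiff ℝ 2 u) (huM : ∀ x ∈ tsupport η, |u x| ≤ M) (hA : Continuous A) (j : Fin 2)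
    (hcA : ∀ x, c * (1 + pd j u x ^ 2) ^ (-(μ / 2)) ≤ A x) :
    cutoffMoment η (pd j u) (n + 1) (s + 1) ≤
      2 * M * (((1 + 2 * |s|) / 2 + (n + 1)) *
            cutoffMoment η (pd j u) (n + 1) (2 * s - α + μ / 2) +
          (1 + 2 * |s|) / (2 * c) * (∫ x, η x ^ (2 * (n + 1)) * (1 + pd j u x ^ 2) ^ α *
            (A x * pd j (pd j u) x ^ 2)) +
          (n + 1) * gradMoment η (pd j u) n (α + 1)) +
        2 ^ (s + 1) * ∫ x, η x ^ (2 * (n + 1)) := by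
  have hv : ContDiff ℝ 1 (pd j u) := contDiff_pd j hu one_add_one_eq_two.le
  have hpower := cutoffMoment_le_integral_mul_bracketTest hs hη.continuous hηc hv.continuous n
  have hparts := integral_pd_mul_le (hu.of_le one_le_two) (contDiff_bracketTest (s := s) hη hv)
    (hasCompactSupport_bracketTest (n := n) hηc)
    (fun x hx => huM x (tsupport_bracketTest_subset hx)) j
  have htest := integral_abs_pd_bracketTest_le hc hμ s α n hη hηc hv hA hcA j
  linear_combination hpower + 2 * hparts + 2 * M * htest

end IntegrationByParts

section Iteration

variable {Ω : Set ℝ²} {η : ℝ² → ℝ} {c C m M μ γ s α : ℝ}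

lemma exists_cutoffMoment_le (hΩ : IsOpen Ω) (hc : 0 < c) (hC : 0 ≤ C) (hm : 0 < m) (hμ : 0 ≤ μ)
    (hγ : 0 ≤ γ) (hγ₁ : γ < 1) (hM : 0 ≤ M) (hs : -1 ≤ s) (hα : -(1 / 2) < α) (n : ℕ)
    (hη : ContDiff ℝ 2 η) (hηc : HasCompactSupport η) (hηΩ : tsupport η ⊆ Ω) :
    ∃ K, 0 < K ∧ ∀ a, IsSplittingCoeff c C m μ γ a → ∀ u, ContDiff ℝ 3 u →
      (∀ x ∈ Ω, |u x| ≤ M) → SolvesSplittingEquation a Ω u →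
      cutoffMoment η (pd 0 u) (n + 1) (s + 1) ≤
        K * (1 + gradMoment η (pd 0 u) n (α + 1) +
          gradMoment η (pd 0 u) n ((α + 1) / (1 - γ)) +
          cutoffMoment η (pd 0 u) (n + 1) (2 * s - α + μ / 2)) := by
  obtain ⟨L, hL, hcaccioppoli⟩ := exists_caccioppoli_le (α := α) hΩ hc.le hC hm hγ hγ₁ hα M μ n hη
    hηc hηΩ 0
  let kY := 2 * M * ((1 + 2 * |s|) / 2 + (n + 1))
  let kX := 2 * M * ((1 + 2 * |s|) / (2 * c))
  let kG := 2 * M * (n + 1)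
  let k₀ := 2 ^ (s + 1) * ∫ x, η x ^ (2 * (n + 1))
  have hk₀ : 0 ≤ k₀ := mul_nonneg (by positivity)
    (integral_nonneg fun x => (even_two_mul (n + 1)).pow_nonneg (η x))
  refine ⟨kY + kX * L + kG + k₀ + 1, by positivity, fun a ha u hu huM hau => ?_⟩
  have hu₂ : ContDiff ℝ 2 u := hu.of_le (by norm_num)
  have hpower := cutoffMoment_succ_le_of_abs_le (A := fun x => a 0 (pd 0 u x)) hc hμ hM hs α n
    (hη.of_le one_le_two) hηc hu₂ (fun x hx => huM x (hηΩ hx))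
    ((ha.continuous 0).comp (continuous_pd 0 (hu₂.of_le one_le_two))) 0 fun x => ha.lower_zero _
  have hsecond := (Finset.single_le_sum
    (f := fun i => ∫ x, η x ^ (2 * (n + 1)) * (1 + pd 0 u x ^ 2) ^ α *
      (a i (pd i u x) * pd i (pd 0 u) x ^ 2))
    (fun i _ => integral_nonneg fun x => mul_nonneg
      (mul_nonneg ((even_two_mul _).pow_nonneg _) (by positivity))
      (mul_nonneg (ha.nonneg hc.le i _) (sq_nonneg _))) (Finset.mem_univ 0)).trans
    (hcaccioppoli a ha u hu huM hau)
  have hG₁ := gradMoment_nonneg η (pd 0 u) n (α + 1)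
  have hG₂ := gradMoment_nonneg η (pd 0 u) n ((α + 1) / (1 - γ))
  have hY := cutoffMoment_nonneg η (pd 0 u) (n + 1) (2 * s - α + μ / 2)
  set G₁ := gradMoment η (pd 0 u) n (α + 1)
  set G₂ := gradMoment η (pd 0 u) n ((α + 1) / (1 - γ))
  set Y := cutoffMoment η (pd 0 u) (n + 1) (2 * s - α + μ / 2)
  have hrest : 0 ≤ kY * (1 + G₁ + G₂) + kX * L * Y + kG * (1 + G₂ + Y) + k₀ * (G₁ + G₂ + Y) +
      (1 + G₁ + G₂ + Y) := by positivity
  linear_combination hpower + kX * hsecond + hrest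

theorem iteration_negative_exponents_general (hΩ : IsOpen Ω) (hc : 0 < c) (hC : 0 ≤ C)
    (hm : 0 < m) (hμ : 0 ≤ μ) (hγ : 0 ≤ γ) (hγ₁ : γ < 1) (hM : 0 ≤ M) (hs : -1 ≤ s)
    (hα : -(1 / 2) < α) {l : ℕ} (hl : 1 ≤ l) (hη : ContDiff ℝ 2 η) (hηc : HasCompactSupport η)
    (hηΩ : tsupport η ⊆ Ω) :
    ∃ K, 0 < K ∧ ∀ a, IsSplittingCoeff c C m μ γ a → ∀ u, ContDiff ℝ 3 u →
      (∀ x ∈ Ω, |u x| ≤ M) → SolvesSplittingEquation a Ω u →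
      ∫ x in Ω, η x ^ (2 * l) * (1 + pd 0 u x ^ 2) ^ (s + 1) ≤
        K * (1 +
          (∫ x in Ω, (pd 0 η x ^ 2 + pd 1 η x ^ 2) * η x ^ (2 * l - 2) *
            (1 + pd 0 u x ^ 2) ^ (α + 1)) +
          (∫ x in Ω, (pd 0 η x ^ 2 + pd 1 η x ^ 2) * η x ^ (2 * l - 2) *
            (1 + pd 0 u x ^ 2) ^ ((α + 1) / (1 - γ))) +
          ∫ x in Ω, η x ^ (2 * l) * (1 + pd 0 u x ^ 2) ^ (2 * s - α + μ / 2)) := by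
  obtain ⟨n, rfl⟩ := Nat.exists_eq_add_of_le' hl
  simp_rw [show 2 * (n + 1) - 2 = 2 * n by lia,
    setIntegral_cutoffMoment hηΩ n.succ_ne_zero, setIntegral_gradMoment hηΩ]
  exact exists_cutoffMoment_le hΩ hc hC hm hμ hγ hγ₁ hM hs hα n hη hηc hηΩ

end Iteration

/-- in the modified splitting setting with `|u| ≤ M`, `s = -1/2 + τ_s`,
`α = -1/2 + τ_α` (`τ_s, τ_α > 0`), for every `l ≥ 1` and cut-off `η`:
`∫ η^{2l} Γ₁^{s+1} ≤ c [1 + ∫ |∇η|² η^{2l-2} Γ₁^{α+1} + ∫ |∇η|² η^{2l-2} Γ₁^{(α+1)/(1-γ)}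
  + ∫ η^{2l} Γ₁^{2s-α+μ₁/2}]` with `c` independent of `δ` and `u`. -/
theorem iteration_negative_exponents
    (Ω : Set (EuclideanSpace ℝ (Fin 2))) (hΩo : IsOpen Ω) (hΩb : Bornology.IsBounded Ω)
    (f₁ f₂ : ℝ → ℝ) (hf₁ : ContDiff ℝ 2 f₁) (hf₂ : ContDiff ℝ 2 f₂)
    (c₁ c₂ cb₁ cb₂ μ₁ μ₂ γ : ℝ)
    (hc₁ : 0 < c₁) (hc₂ : 0 < c₂) (hcb₁ : 0 < cb₁) (hcb₂ : 0 < cb₂)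
    (hμ₁ : 1 < μ₁) (hμ₂ : 1 < μ₂) (hμ₁' : μ₁ < 2)
    (hγ₀ : 0 ≤ γ) (hγ : γ < (2 - μ₁) / (1 + (2 - μ₁)))
    (hell₁ : ∀ t : ℝ, c₁ * (1 + |t|) ^ (-μ₁) ≤ deriv (deriv f₁) t ∧ deriv (deriv f₁) t ≤ cb₁)
    (hell₂ : ∀ t : ℝ, c₂ * (1 + |t|) ^ (-μ₂) ≤ deriv (deriv f₂) t ∧
      deriv (deriv f₂) t ≤ cb₂ * (1 + |t|) ^ γ)
    (M : ℝ) (hM : 0 < M)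
    (τs τα s α : ℝ) (hτs : 0 < τs) (hτα : 0 < τα)
    (hsdef : s = -(1/2) + τs) (hαdef : α = -(1/2) + τα)
    (l : ℕ) (hl : 1 ≤ l) :
    ∀ (η : EuclideanSpace ℝ (Fin 2) → ℝ), ContDiff ℝ (⊤ : ℕ∞) η →
      HasCompactSupport η → tsupport η ⊆ Ω →
      (∀ x, 0 ≤ η x) → (∀ x, η x ≤ 1) →
    ∃ c : ℝ, 0 < c ∧
      ∀ (δ : ℝ), 0 < δ → δ ≤ 1 →
      ∀ (u : EuclideanSpace ℝ (Fin 2) → ℝ), ContDiff ℝ (⊤ : ℕ∞) u →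
      (∀ x ∈ Ω, |u x| ≤ M) →
      (∀ x ∈ Ω, (δ + deriv (deriv f₁) (pd 0 u x)) * pd 0 (pd 0 u) x
          + (δ * (γ + 1) * |pd 1 u x| ^ γ + deriv (deriv f₂) (pd 1 u x))
            * pd 1 (pd 1 u) x = 0) →
      (∫ x in Ω, η x ^ (2 * l) * (1 + (pd 0 u x) ^ 2) ^ (s + 1))
      ≤ c * (1
          + (∫ x in Ω, ((pd 0 η x) ^ 2 + (pd 1 η x) ^ 2) * η x ^ (2 * l - 2)
              * (1 + (pd 0 u x) ^ 2) ^ (α + 1))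
          + (∫ x in Ω, ((pd 0 η x) ^ 2 + (pd 1 η x) ^ 2) * η x ^ (2 * l - 2)
              * (1 + (pd 0 u x) ^ 2) ^ ((α + 1) / (1 - γ)))
          + ∫ x in Ω, η x ^ (2 * l)
              * (1 + (pd 0 u x) ^ 2) ^ (2 * s - α + μ₁ / 2)) := by
  intro η hη hηc hηΩ _ _
  have hγ₁ : γ < 1 := hγ.trans ((div_lt_one (by linarith)).2 (by linarith))
  obtain ⟨K, hK, hbound⟩ := iteration_negative_exponents_general (c := c₁ * 2 ^ (-(μ₁ / 2)))
    (C := 2 + cb₁ + cb₂) (m := c₂ * 2 ^ (-μ₂)) (μ := μ₁) (s := s) (α := α) hΩo (by positivity)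
    (by positivity) (by positivity) (by linarith) hγ₀ hγ₁ hM.le (by linarith) (by linarith) hl
    (contDiff_infty.1 hη 2) hηc hηΩ
  refine ⟨K, hK, fun δ hδ hδ₁ u hu huM hEuler => ?_⟩
  refine hbound (regularizedCoeff f₁ f₂ γ δ) ?_ u (contDiff_infty.1 hu 3) huM ?_
  · exact isSplittingCoeff_regularizedCoeff hf₁ hf₂ hc₁.le hc₂.le hcb₁.le hcb₂.le (by linarith)
      (by linarith) hγ₀ hγ₁.le hδ.le hδ₁ hell₁ hell₂
  · simpa [SolvesSplittingEquation, regularizedCoeff, Fin.sum_univ_two] using hEuler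
end
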